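/- arXiv:1402.0050 — 3 statements merged into one kernel-verified Lean document; each statement's English description precedes it below -/
import Mathlib

section
/- In the process algebra 𝒢 built from a PCP instance INST: for all ℙ and ℙ_v, the processes C, C‖Gℙ, C‖ℙ, C‖Wℙ (for any W-constant W), and C‖G_vℙ_v are all branching bisimilar to one another. -/
/-!
Two processes that reach each other by silent moves (up to structural congruence) are
branching bisimilar: whatever one can do, the other can do after silently moving to it
(`isBranchingBisim_rel` contains this as its first case, `MReach`).  The constant `C` can spawn `G`
and `G_v`, which generate any `ℙ` resp. `ℙ_v`, and everything generated can silently vanish.  Hence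
`C`, `C‖Gℙ`, `C‖ℙ`, `C‖G_vℙ_v` lie on a common silent cycle, and so does `C‖W(ω,0)ℙ`.

The remaining case is `C‖W(ω,j)ℙ`, where `ω` is a suffix of `uᵢ` or `vᵢ` for an `i` which may differ
from `j`, so that `C` need not be able to generate `W(ω,j)`.  There the following relation
`CRel` (for an arbitrary parallel context `T`) is a branching bisimulation:
* `C‖T‖W(ω,j)ℙ` is related to everything on the silent cycle of `C‖T`: letters and `λ_I` are answered
  through `C‖T‖W(ω,0)ℙ`, the index `j` and `λ_S` through `C‖T‖W(ε,j)ℙ`, both on that cycle;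
* `I‖T‖W(ω,j)ℙ` is related to `I‖T‖W(ω,0)ℙ`, because `I` itself performs every index;
* `S‖T‖W(ω,k)ℙ` is related to `S‖T‖W(ε,k)ℙ`, because `S` itself performs every letter.
After `λ_I` or `λ_S` the constant `C'` regenerates any `W(ω,k)ℙ`, so both sides are again on a common
silent cycle.

Inverting transitions modulo structural congruence is done with the auxiliary semantics `LStep`,
for which structural congruence is a strong bisimulation (`SC.lstep`).
-/

/-- The reflexive–transitive closure of the silent (`τ`) transitions of an LTS. -/
def SilentStar {S A : Type*} (tr : S → A → S → Prop) (τ : A) : S → S → Prop :=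
  Relation.ReflTransGen (fun p q => tr p τ q)

/-- `R` is a branching bisimulation for the LTS `tr` with silent label `τ`. -/
def IsBranchingBisim {S A : Type*} (tr : S → A → S → Prop) (τ : A)
    (R : S → S → Prop) : Prop :=
  ∀ P Q, R P Q →
    (∀ ℓ P', tr P ℓ P' →
      (ℓ = τ ∧ R P' Q) ∨
      ∃ Q'' Q', SilentStar tr τ Q Q'' ∧ tr Q'' ℓ Q' ∧ R P Q'' ∧ R P' Q') ∧
    (∀ ℓ Q', tr Q ℓ Q' →
      (ℓ = τ ∧ R P Q') ∨
      ∃ P'' P', SilentStar tr τ P P'' ∧ tr P'' ℓ P' ∧ R P'' Q ∧ R P' Q')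

/-- Branching bisimilarity: the union of all branching bisimulations. -/
def BrBisim {S A : Type*} (tr : S → A → S → Prop) (τ : A) (P Q : S) : Prop :=
  ∃ R, IsBranchingBisim tr τ R ∧ R P Q

/-- The weak step `P ⟹̂ℓ P'`. -/
def WeakStep {S A : Type*} (tr : S → A → S → Prop) (τ : A) (ℓ : A) (P P' : S) : Prop :=
  (ℓ = τ ∧ SilentStar tr τ P P') ∨
  (ℓ ≠ τ ∧ ∃ P₁ P₂, SilentStar tr τ P P₁ ∧ tr P₁ ℓ P₂ ∧ SilentStar tr τ P₂ P')

/-- `R` is a weak bisimulation for the LTS `tr` with silent label `τ`. -/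
def IsWeakBisim {S A : Type*} (tr : S → A → S → Prop) (τ : A)
    (R : S → S → Prop) : Prop :=
  ∀ P Q, R P Q →
    (∀ ℓ P', tr P ℓ P' → ∃ Q', WeakStep tr τ ℓ Q Q' ∧ R P' Q') ∧
    (∀ ℓ Q', tr Q ℓ Q' → ∃ P', WeakStep tr τ ℓ P P' ∧ R P' Q')

/-- Weak bisimilarity: the union of all weak bisimulations. -/
def WkBisim {S A : Type*} (tr : S → A → S → Prop) (τ : A) (P Q : S) : Prop :=
  ∃ R, IsWeakBisim tr τ R ∧ R P Q

/-- The process constants of the process algebra `𝒢` built from a PCP instance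
with `n` pairs of words over the alphabet `α`.  `W ω (some i)` stands for
`W(ω,i)` and `W ω none` for `W(ω,0)`. -/
inductive Cst (n : ℕ) (α : Type) : Type where
  | X | Y | Z | I | S | C | C' | D | G | G' | Gu | Gv | Gv'
  | U : Fin n → Cst n α
  | V : Fin n → Cst n α
  | W : List α → Option (Fin n) → Cst n α

/-- The labels of `𝒢`: `λ_U, λ_V, λ_D, λ_I, λ_S, λ_Z`, the indices `1,…,n`,
the letters of `α`, and the silent label `τ`. -/
inductive Lab (n : ℕ) (α : Type) : Type where
  | lU | lV | lD | lI | lS | lZ | tau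
  | idx : Fin n → Lab n α
  | ltr : α → Lab n α

/-- Processes: `ε`, constants, sequential and parallel composition. -/
inductive Proc (n : ℕ) (α : Type) : Type where
  | nil
  | cst : Cst n α → Proc n α
  | seq : Proc n α → Proc n α → Proc n α
  | par : Proc n α → Proc n α → Proc n α

/-- Shorthand for a constant viewed as a process. -/
def K {n : ℕ} {α : Type} (c : Cst n α) : Proc n α := Proc.cst c

/-- The raw transition rules of `𝒢` (from Fig. 3 of the paper), closed under
the structural rules for sequential (left) and parallel composition. -/
inductive Step {n : ℕ} {α : Type} (u v : Fin n → List α) :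
    Proc n α → Lab n α → Proc n α → Prop where
  | xU : Step u v (K .X) .lU (.par (K .D) (K .Gv))
  | xT : Step u v (K .X) .tau (K .D)
  | yT : Step u v (K .Y) .tau (K .D)
  | dT : Step u v (K .D) .tau (.par (K .D) (K .Gu))
  | dD : Step u v (K .D) .lD (K .C)
  | guT (i : Fin n) : Step u v (K .Gu) .tau (.seq (K .Gu) (K (.U i)))
  | guU (i : Fin n) : Step u v (K .Gu) .lU (.seq (K .Gv) (K (.U i)))
  | guGv' : Step u v (K .Gu) .tau (K .Gv')
  | gv'T (i : Fin n) : Step u v (K .Gv') .tau (.seq (K .Gv') (K (.V i)))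
  | gv'Z : Step u v (K .Gv') .tau (K .Z)
  | gvT (i : Fin n) : Step u v (K .Gv) .tau (.seq (K .Gv) (K (.V i)))
  | gvE : Step u v (K .Gv) .tau .nil
  | gvV : Step u v (K .Gv) .lV (K .Z)
  | zE : Step u v (K .Z) .tau .nil
  | zZ : Step u v (K .Z) .lZ .nil
  | cI : Step u v (K .C) .lI (K .I)
  | cS : Step u v (K .C) .lS (K .S)
  | cG : Step u v (K .C) .tau (.par (K .C) (K .G))
  | cGv : Step u v (K .C) .tau (.par (K .C) (K .Gv))
  | gU (i : Fin n) : Step u v (K .G) .tau (.seq (K .G) (K (.U i)))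
  | gV (i : Fin n) : Step u v (K .G) .tau (.seq (K .G) (K (.V i)))
  | gE : Step u v (K .G) .tau .nil
  | iC : Step u v (K .I) .lI (K .C')
  | iI (i : Fin n) : Step u v (K .I) (.idx i) (K .I)
  | sC : Step u v (K .S) .lS (K .C')
  | sS (a : α) : Step u v (K .S) (.ltr a) (K .S)
  | c'G : Step u v (K .C') .tau (.par (K .C') (K .G'))
  | c'E : Step u v (K .C') .tau .nil
  | g'U (i : Fin n) : Step u v (K .G') .tau (.seq (K .G') (K (.U i)))
  | g'V (i : Fin n) : Step u v (K .G') .tau (.seq (K .G') (K (.V i)))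
  | g'W (ω : List α) (k : Option (Fin n)) :
      Step u v (K .G') .tau (.seq (K .G') (K (.W ω k)))
  | g'Gv : Step u v (K .G') .tau (K .Gv)
  | g'Z : Step u v (K .G') .tau (K .Z)
  | uW (i : Fin n) : Step u v (K (.U i)) .tau (K (.W (u i) (some i)))
  | vW (i : Fin n) : Step u v (K (.V i)) .tau (K (.W (v i) (some i)))
  | wA (a : α) (ω : List α) (k : Option (Fin n)) :
      Step u v (K (.W (a :: ω) k)) (.ltr a) (K (.W ω k))
  | wI (ω : List α) (i : Fin n) :
      Step u v (K (.W ω (some i))) (.idx i) (K (.W ω none))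
  | wTa (a : α) (ω : List α) (k : Option (Fin n)) :
      Step u v (K (.W (a :: ω) k)) .tau (K (.W ω k))
  | wTi (ω : List α) (i : Fin n) :
      Step u v (K (.W ω (some i))) .tau (K (.W ω none))
  | wE : Step u v (K (.W [] none)) .tau .nil
  | seqL {P ℓ P'} (Q) : Step u v P ℓ P' → Step u v (.seq P Q) ℓ (.seq P' Q)
  | parL {P ℓ P'} (Q) : Step u v P ℓ P' → Step u v (.par P Q) ℓ (.par P' Q)
  | parR {Q ℓ Q'} (P) : Step u v Q ℓ Q' → Step u v (.par P Q) ℓ (.par P Q')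

/-- Structural congruence: sequential composition is associative, parallel
composition is associative and commutative, and `ε` is a unit for both. -/
inductive SC {n : ℕ} {α : Type} : Proc n α → Proc n α → Prop where
  | refl (P) : SC P P
  | symm {P Q} : SC P Q → SC Q P
  | trans {P Q R} : SC P Q → SC Q R → SC P R
  | seqCong {P P' Q Q'} : SC P P' → SC Q Q' → SC (.seq P Q) (.seq P' Q')
  | parCong {P P' Q Q'} : SC P P' → SC Q Q' → SC (.par P Q) (.par P' Q')
  | seqAssoc (P Q R) : SC (.seq (.seq P Q) R) (.seq P (.seq Q R))
  | parAssoc (P Q R) : SC (.par (.par P Q) R) (.par P (.par Q R))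
  | parComm (P Q) : SC (.par P Q) (.par Q P)
  | seqNilL (P) : SC (.seq .nil P) P
  | seqNilR (P) : SC (.seq P .nil) P
  | parNil (P) : SC (.par .nil P) P

/-- The transition relation of `𝒢`: the raw steps taken up to structural
congruence of processes. -/
def GTrans {n : ℕ} {α : Type} (u v : Fin n → List α) :
    Proc n α → Lab n α → Proc n α → Prop :=
  fun P ℓ Q => ∃ P' Q', SC P P' ∧ Step u v P' ℓ Q' ∧ SC Q' Q

/-- Sequential composition of a list of constants (`ε` for the empty list). -/
def seqComp {n : ℕ} {α : Type} (l : List (Cst n α)) : Proc n α :=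
  l.foldr (fun c P => .seq (.cst c) P) .nil

/-- `c` is one of the constants `U₁,…,Uₙ,V₁,…,Vₙ`. -/
def IsUV {n : ℕ} {α : Type} (c : Cst n α) : Prop :=
  (∃ i, c = Cst.U i) ∨ (∃ i, c = Cst.V i)

/-- `c` is a `W`-constant of `𝒢`, i.e. `W(ω,i)` or `W(ω,0)` with `ω` a suffix
of some `uᵢ` or `vᵢ`. -/
def IsW {n : ℕ} {α : Type} (u v : Fin n → List α) (c : Cst n α) : Prop :=
  ∃ ω k, c = Cst.W ω k ∧ ∃ i, (ω <:+ u i ∨ ω <:+ v i)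

/-- `c` is a `U`-, `V`- or `W`-constant of `𝒢`. -/
def IsUVW {n : ℕ} {α : Type} (u v : Fin n → List α) (c : Cst n α) : Prop :=
  IsUV c ∨ IsW u v c

/-- The PCP instance `(u₁,v₁),…,(uₙ,vₙ)` has a solution. -/
def HasSolution {n : ℕ} {α : Type} (u v : Fin n → List α) : Prop :=
  ∃ is : List (Fin n), is ≠ [] ∧ (is.map u).flatten = (is.map v).flatten

section CGenerator

variable {n : ℕ} {α : Type} {u v : Fin n → List α}

/-! ### Transitions modulo structural congruence -/

/-- `P` is built from `ε` only. -/
def Null : Proc n α → Prop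
  | .nil => True
  | .cst _ => False
  | .seq P Q => Null P ∧ Null Q
  | .par P Q => Null P ∧ Null Q

/-- The transition rules extended by a rule letting `PQ` move through `Q` when `P` is built from
`ε` only.  Unlike `Step`, this relation is compatible with structural congruence. -/
inductive LStep (u v : Fin n → List α) : Proc n α → Lab n α → Proc n α → Prop where
  | base {c ℓ P'} : Step u v (.cst c) ℓ P' → LStep u v (.cst c) ℓ P'
  | seqL {P ℓ P'} (Q) : LStep u v P ℓ P' → LStep u v (.seq P Q) ℓ (.seq P' Q)
  | seqR {P Q ℓ Q'} : Null P → LStep u v Q ℓ Q' → LStep u v (.seq P Q) ℓ Q'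
  | parL {P ℓ P'} (Q) : LStep u v P ℓ P' → LStep u v (.par P Q) ℓ (.par P' Q)
  | parR {Q ℓ Q'} (P) : LStep u v Q ℓ Q' → LStep u v (.par P Q) ℓ (.par P Q')

theorem Step.lstep {P P' : Proc n α} {ℓ : Lab n α} (h : Step u v P ℓ P') : LStep u v P ℓ P' := by
  induction h with
  | seqL Q _ ih => exact .seqL Q ih
  | parL Q _ ih => exact .parL Q ih
  | parR P _ ih => exact .parR P ih
  | _ => exact .base (by constructor)

/-- Structural congruence preserves nullity and is a strong bisimulation for `LStep`. -/
theorem SC.lstep {P Q : Proc n α} (h : SC P Q) :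
    (Null P ↔ Null Q) ∧
    (∀ ℓ P', LStep u v P ℓ P' → ∃ Q', LStep u v Q ℓ Q' ∧ SC P' Q') ∧
    (∀ ℓ Q', LStep u v Q ℓ Q' → ∃ P', LStep u v P ℓ P' ∧ SC P' Q') := by
  induction h with
  | refl P => exact ⟨Iff.rfl, fun ℓ P' h => ⟨P', h, .refl _⟩, fun ℓ P' h => ⟨P', h, .refl _⟩⟩
  | symm _ ih =>
    obtain ⟨h0, h1, h2⟩ := ih
    refine ⟨h0.symm, fun ℓ P' h => ?_, fun ℓ P' h => ?_⟩
    · obtain ⟨Q', a, b⟩ := h2 ℓ P' h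
      exact ⟨Q', a, b.symm⟩
    · obtain ⟨Q', a, b⟩ := h1 ℓ P' h
      exact ⟨Q', a, b.symm⟩
  | trans _ _ ih1 ih2 =>
    obtain ⟨h0, h1, h2⟩ := ih1
    obtain ⟨k0, k1, k2⟩ := ih2
    refine ⟨h0.trans k0, fun ℓ P' h => ?_, fun ℓ P' h => ?_⟩
    · obtain ⟨Q', a, b⟩ := h1 ℓ P' h
      obtain ⟨R', c, d⟩ := k1 ℓ Q' a
      exact ⟨R', c, b.trans d⟩
    · obtain ⟨Q', a, b⟩ := k2 ℓ P' h
      obtain ⟨R', c, d⟩ := h2 ℓ Q' a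
      exact ⟨R', c, d.trans b⟩
  | seqCong s1 s2 ih1 ih2 =>
    obtain ⟨h0, h1, h2⟩ := ih1
    obtain ⟨k0, k1, k2⟩ := ih2
    refine ⟨by simp only [Null, h0, k0], fun ℓ P' h => ?_, fun ℓ P' h => ?_⟩
    · cases h with
      | seqL _ p =>
        obtain ⟨Q', a, b⟩ := h1 _ _ p
        exact ⟨_, .seqL _ a, .seqCong b s2⟩
      | seqR hn q =>
        obtain ⟨Q', a, b⟩ := k1 _ _ q
        exact ⟨_, .seqR (h0.1 hn) a, b⟩
    · cases h with
      | seqL _ p =>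
        obtain ⟨Q', a, b⟩ := h2 _ _ p
        exact ⟨_, .seqL _ a, .seqCong b s2⟩
      | seqR hn q =>
        obtain ⟨Q', a, b⟩ := k2 _ _ q
        exact ⟨_, .seqR (h0.2 hn) a, b⟩
  | parCong s1 s2 ih1 ih2 =>
    obtain ⟨h0, h1, h2⟩ := ih1
    obtain ⟨k0, k1, k2⟩ := ih2
    refine ⟨by simp only [Null, h0, k0], fun ℓ P' h => ?_, fun ℓ P' h => ?_⟩
    · cases h with
      | parL _ p =>
        obtain ⟨Q', a, b⟩ := h1 _ _ p
        exact ⟨_, .parL _ a, .parCong b s2⟩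
      | parR _ q =>
        obtain ⟨Q', a, b⟩ := k1 _ _ q
        exact ⟨_, .parR _ a, .parCong s1 b⟩
    · cases h with
      | parL _ p =>
        obtain ⟨Q', a, b⟩ := h2 _ _ p
        exact ⟨_, .parL _ a, .parCong b s2⟩
      | parR _ q =>
        obtain ⟨Q', a, b⟩ := k2 _ _ q
        exact ⟨_, .parR _ a, .parCong s1 b⟩
  | seqAssoc P Q R =>
    refine ⟨by simp only [Null, and_assoc], fun ℓ P' h => ?_, fun ℓ P' h => ?_⟩
    · cases h with
      | seqL _ p =>
        cases p with
        | seqL _ p => exact ⟨_, .seqL _ p, .seqAssoc _ _ _⟩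
        | seqR hn q => exact ⟨_, .seqR hn (.seqL _ q), .refl _⟩
      | seqR hn q => exact ⟨_, .seqR hn.1 (.seqR hn.2 q), .refl _⟩
    · cases h with
      | seqL _ p => exact ⟨_, .seqL _ (.seqL _ p), .seqAssoc _ _ _⟩
      | seqR hn q =>
        cases q with
        | seqL _ p => exact ⟨_, .seqL _ (.seqR hn p), .refl _⟩
        | seqR hm q => exact ⟨_, .seqR ⟨hn, hm⟩ q, .refl _⟩
  | parAssoc P Q R =>
    refine ⟨by simp only [Null, and_assoc], fun ℓ P' h => ?_, fun ℓ P' h => ?_⟩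
    · cases h with
      | parL _ p =>
        cases p with
        | parL _ p => exact ⟨_, .parL _ p, .parAssoc _ _ _⟩
        | parR _ q => exact ⟨_, .parR _ (.parL _ q), .parAssoc _ _ _⟩
      | parR _ q => exact ⟨_, .parR _ (.parR _ q), .parAssoc _ _ _⟩
    · cases h with
      | parL _ p => exact ⟨_, .parL _ (.parL _ p), .parAssoc _ _ _⟩
      | parR _ q =>
        cases q with
        | parL _ p => exact ⟨_, .parL _ (.parR _ p), .parAssoc _ _ _⟩
        | parR _ q => exact ⟨_, .parR _ q, .parAssoc _ _ _⟩
  | parComm P Q =>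
    refine ⟨by simp only [Null, and_comm], fun ℓ P' h => ?_, fun ℓ P' h => ?_⟩
    · cases h with
      | parL _ p => exact ⟨_, .parR _ p, .parComm _ _⟩
      | parR _ q => exact ⟨_, .parL _ q, .parComm _ _⟩
    · cases h with
      | parL _ p => exact ⟨_, .parR _ p, .parComm _ _⟩
      | parR _ q => exact ⟨_, .parL _ q, .parComm _ _⟩
  | seqNilL P =>
    refine ⟨by simp only [Null, true_and], fun ℓ P' h => ?_, fun ℓ P' h => ?_⟩
    · cases h with
      | seqL _ p => cases p
      | seqR hn q => exact ⟨_, q, .refl _⟩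
    · exact ⟨_, .seqR trivial h, .refl _⟩
  | seqNilR P =>
    refine ⟨by simp only [Null, and_true], fun ℓ P' h => ?_, fun ℓ P' h => ?_⟩
    · cases h with
      | seqL _ p => exact ⟨_, p, .seqNilR _⟩
      | seqR hn q => cases q
    · exact ⟨_, .seqL _ h, .seqNilR _⟩
  | parNil P =>
    refine ⟨by simp only [Null, true_and], fun ℓ P' h => ?_, fun ℓ P' h => ?_⟩
    · cases h with
      | parL _ p => cases p
      | parR _ q => exact ⟨_, q, .parNil _⟩
    · exact ⟨_, .parR _ h, .parNil _⟩

theorem GTrans.lstep {P Q P' : Proc n α} {ℓ : Lab n α} (h : GTrans u v P ℓ P') (hs : SC P Q) :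
    ∃ Q', LStep u v Q ℓ Q' ∧ SC P' Q' := by
  obtain ⟨P1, P2, h1, h2, h3⟩ := h
  obtain ⟨Q', a, b⟩ := (SC.lstep (hs.symm.trans h1)).2.2 _ _ h2.lstep
  exact ⟨Q', a, (b.trans h3).symm⟩

theorem LStep.gtrans {P P' : Proc n α} {ℓ : Lab n α} (h : LStep u v P ℓ P') :
    GTrans u v P ℓ P' := by
  induction h with
  | base h => exact ⟨_, _, .refl _, h, .refl _⟩
  | seqL Q _ ih =>
    obtain ⟨P1, P2, h1, h2, h3⟩ := ih
    exact ⟨_, _, .seqCong h1 (.refl _), .seqL _ h2, .seqCong h3 (.refl _)⟩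
  | @seqR P Q ℓ Q' hn _ ih =>
    obtain ⟨P1, P2, h1, h2, h3⟩ := ih
    have null_sc : ∀ X : Proc n α, Null X → SC X .nil := by
      intro X
      induction X with
      | nil => exact fun _ => .refl _
      | cst c => exact fun h => h.elim
      | seq A B iA iB => exact fun h => (SC.seqCong (iA h.1) (iB h.2)).trans (.seqNilL _)
      | par A B iA iB => exact fun h => (SC.parCong (iA h.1) (iB h.2)).trans (.parNil _)
    exact ⟨_, _, ((SC.seqCong (null_sc _ hn) (.refl _)).trans (.seqNilL _)).trans h1, h2, h3⟩
  | parL Q _ ih =>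
    obtain ⟨P1, P2, h1, h2, h3⟩ := ih
    exact ⟨_, _, .parCong h1 (.refl _), .parL _ h2, .parCong h3 (.refl _)⟩
  | parR Q _ ih =>
    obtain ⟨P1, P2, h1, h2, h3⟩ := ih
    exact ⟨_, _, .parCong (.refl _) h1, .parR _ h2, .parCong (.refl _) h3⟩

/-! ### Silent reachability -/

/-- Silent reachability up to structural congruence. -/
def Reach (u v : Fin n → List α) : Proc n α → Proc n α → Prop :=
  Relation.ReflTransGen (fun P Q => SC P Q ∨ Step u v P .tau Q)

theorem Reach.refl (P : Proc n α) : Reach u v P P := Relation.ReflTransGen.refl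

theorem Reach.sc {P Q : Proc n α} (h : SC P Q) : Reach u v P Q :=
  Relation.ReflTransGen.single (.inl h)

theorem Reach.step {P Q : Proc n α} (h : Step u v P .tau Q) : Reach u v P Q :=
  Relation.ReflTransGen.single (.inr h)

theorem Reach.trans {P Q R : Proc n α} (h : Reach u v P Q) (k : Reach u v Q R) : Reach u v P R :=
  Relation.ReflTransGen.trans h k

theorem Reach.parL {P P' : Proc n α} (Q : Proc n α) (h : Reach u v P P') :
    Reach u v (.par P Q) (.par P' Q) :=
  Relation.ReflTransGen.lift (fun X => Proc.par X Q)
    (fun _ _ h => h.imp (fun h => .parCong h (.refl _)) (fun h => .parL _ h)) _ _ h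

theorem Reach.parR {P P' : Proc n α} (Q : Proc n α) (h : Reach u v P P') :
    Reach u v (.par Q P) (.par Q P') :=
  Relation.ReflTransGen.lift (fun X => Proc.par Q X)
    (fun _ _ h => h.imp (fun h => .parCong (.refl _) h) (fun h => .parR _ h)) _ _ h

theorem Reach.seqL {P P' : Proc n α} (Q : Proc n α) (h : Reach u v P P') :
    Reach u v (.seq P Q) (.seq P' Q) :=
  Relation.ReflTransGen.lift (fun X => Proc.seq X Q)
    (fun _ _ h => h.imp (fun h => .seqCong h (.refl _)) (fun h => .seqL _ h)) _ _ h

theorem Reach.silent {P Q : Proc n α} (h : Reach u v P Q) :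
    ∃ Q0, SilentStar (GTrans u v) .tau P Q0 ∧ SC Q0 Q := by
  induction h with
  | refl => exact ⟨P, Relation.ReflTransGen.refl, .refl _⟩
  | tail _ hs ih =>
    obtain ⟨Q0, a, b⟩ := ih
    rcases hs with hs | hs
    · exact ⟨Q0, a, b.trans hs⟩
    · exact ⟨_, Relation.ReflTransGen.tail a ⟨_, _, b, hs, .refl _⟩, .refl _⟩

/-- Mutual silent reachability up to structural congruence. -/
def MReach (u v : Fin n → List α) (P Q : Proc n α) : Prop := Reach u v P Q ∧ Reach u v Q P

theorem MReach.refl (P : Proc n α) : MReach u v P P := ⟨.refl _, .refl _⟩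

theorem MReach.sc {P Q : Proc n α} (h : SC P Q) : MReach u v P Q := ⟨.sc h, .sc h.symm⟩

theorem MReach.symm {P Q : Proc n α} (h : MReach u v P Q) : MReach u v Q P := ⟨h.2, h.1⟩

theorem MReach.trans {P Q R : Proc n α} (h : MReach u v P Q) (k : MReach u v Q R) :
    MReach u v P R := ⟨h.1.trans k.1, k.2.trans h.2⟩

/-! ### Generating and erasing sequential compositions -/

theorem reach_W_drop (l ω : List α) (k : Option (Fin n)) :
    Reach u v (K (.W (l ++ ω) k)) (K (.W ω k)) := by
  induction l with
  | nil => exact .refl _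
  | cons a l ih => exact (Reach.step (.wTa a (l ++ ω) k)).trans ih

theorem reach_W_nil (ω : List α) (k : Option (Fin n)) :
    Reach u v (K (.W ω k)) (K (.W [] k)) := by
  simpa using reach_W_drop (u := u) (v := v) ω [] k

theorem reach_W_none (ω : List α) (k : Option (Fin n)) :
    Reach u v (K (.W ω k)) (K (.W ω none)) := by
  cases k with
  | none => exact .refl _
  | some i => exact .step (.wTi ω i)

theorem reach_W_erase (ω : List α) (k : Option (Fin n)) : Reach u v (K (.W ω k)) .nil :=
  ((reach_W_nil ω k).trans (reach_W_none _ _)).trans (.step .wE)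

theorem reach_UV_erase {c : Cst n α} (h : IsUV c) : Reach u v (K c) .nil := by
  rcases h with ⟨i, rfl⟩ | ⟨i, rfl⟩
  · exact (Reach.step (.uW i)).trans (reach_W_erase _ _)
  · exact (Reach.step (.vW i)).trans (reach_W_erase _ _)

theorem reach_seq_erase {P Q : Proc n α} (hP : Reach u v P .nil) (hQ : Reach u v Q .nil) :
    Reach u v (.seq P Q) .nil :=
  ((hP.seqL Q).trans (.sc (.seqNilL _))).trans hQ

theorem reach_seqComp_erase (lp : List (Cst n α)) (hlp : ∀ c ∈ lp, IsUV c) :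
    Reach u v (seqComp lp) .nil := by
  induction lp with
  | nil => exact .refl _
  | cons c lp ih =>
    exact reach_seq_erase (reach_UV_erase (hlp c (by simp)))
      (ih fun d hd => hlp d (by simp [hd]))

theorem reach_par_erase {H P : Proc n α} (hP : Reach u v P .nil) : Reach u v (.par H P) H :=
  (hP.parR H).trans (.sc ((SC.parComm _ _).trans (.parNil _)))

/-- A generator `A` that can prepend each constant of `lp` generates `seqComp lp`. -/
theorem reach_generate (A : Proc n α) (lp : List (Cst n α))
    (hlp : ∀ c ∈ lp, Step u v A .tau (.seq A (K c))) :
    Reach u v A (.seq A (seqComp lp)) := by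
  induction lp with
  | nil => exact .sc (SC.seqNilR _).symm
  | cons c lp ih =>
    refine (ih fun d hd => hlp d (by simp [hd])).trans ?_
    exact ((Reach.step (hlp c (by simp))).seqL _).trans (.sc (.seqAssoc _ _ _))

theorem step_G {c : Cst n α} (h : IsUV c) : Step u v (K .G) .tau (.seq (K .G) (K c)) := by
  rcases h with ⟨i, rfl⟩ | ⟨i, rfl⟩
  · exact .gU i
  · exact .gV i

theorem reach_C_G (lp : List (Cst n α)) (hlp : ∀ c ∈ lp, IsUV c) :
    Reach u v (K .C) (.par (K .C) (.seq (K .G) (seqComp lp))) :=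
  (Reach.step .cG).trans ((reach_generate _ lp fun c hc => step_G (hlp c hc)).parR _)

theorem reach_C_P (lp : List (Cst n α)) (hlp : ∀ c ∈ lp, IsUV c) :
    Reach u v (K .C) (.par (K .C) (seqComp lp)) :=
  (reach_C_G lp hlp).trans
    ((((Reach.step .gE).seqL _).trans (.sc (.seqNilL _))).parR _)

theorem reach_C_Gv (lv : List (Fin n)) :
    Reach u v (K .C) (.par (K .C) (.seq (K .Gv) (seqComp (lv.map fun i => Cst.V i)))) := by
  refine (Reach.step .cGv).trans ((reach_generate _ _ fun c hc => ?_).parR _)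
  obtain ⟨i, -, rfl⟩ := List.mem_map.1 hc
  exact .gvT i

/-- `C` generates `W(ω,i)ℙ` for a suffix `ω` of `uᵢ` or `vᵢ` (with the matching index `i`). -/
theorem reach_C_W_matching (lp : List (Cst n α)) (hlp : ∀ c ∈ lp, IsUV c) (ω : List α) (i : Fin n)
    (hW : ω <:+ u i ∨ ω <:+ v i) :
    Reach u v (K .C) (.par (K .C) (.seq (K (.W ω (some i))) (seqComp lp))) := by
  rcases hW with ⟨l, hl⟩ | ⟨l, hl⟩
  · refine (reach_C_P (.U i :: lp) ?_).trans (Reach.parR _ (Reach.seqL _ ?_))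
    · simpa using ⟨.inl ⟨i, rfl⟩, hlp⟩
    · refine (Reach.step (.uW i)).trans ?_
      rw [← hl]
      exact reach_W_drop l ω _
  · refine (reach_C_P (.V i :: lp) ?_).trans (Reach.parR _ (Reach.seqL _ ?_))
    · simpa using ⟨.inr ⟨i, rfl⟩, hlp⟩
    · refine (Reach.step (.vW i)).trans ?_
      rw [← hl]
      exact reach_W_drop l ω _

theorem reach_C_W_none (lp : List (Cst n α)) (hlp : ∀ c ∈ lp, IsUV c) (ω : List α)
    (hW : ∃ i, ω <:+ u i ∨ ω <:+ v i) :
    Reach u v (K .C) (.par (K .C) (.seq (K (.W ω none)) (seqComp lp))) := by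
  obtain ⟨i, hi⟩ := hW
  exact (reach_C_W_matching lp hlp ω i hi).trans (((reach_W_none _ _).seqL _).parR _)

theorem reach_C_W_nil (lp : List (Cst n α)) (hlp : ∀ c ∈ lp, IsUV c) (j : Fin n) :
    Reach u v (K .C) (.par (K .C) (.seq (K (.W [] (some j))) (seqComp lp))) :=
  reach_C_W_matching lp hlp [] j (.inl (List.nil_suffix))

/-- `C'` generates every `W(ω,k)ℙ`. -/
theorem reach_C'_W (lp : List (Cst n α)) (hlp : ∀ c ∈ lp, IsUV c) (ω : List α)
    (k : Option (Fin n)) :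
    Reach u v (K .C') (.par (K .C') (.seq (K (.W ω k)) (seqComp lp))) := by
  refine (Reach.step .c'G).trans (Reach.parR _ ?_)
  refine (reach_generate (K .G') (.W ω k :: lp) ?_).trans ?_
  · intro c hc
    rcases List.mem_cons.1 hc with rfl | hc
    · exact .g'W ω k
    · rcases hlp c hc with ⟨i, rfl⟩ | ⟨i, rfl⟩
      · exact .g'U i
      · exact .g'V i
  · exact (((Reach.step .g'Z).trans (.step .zE)).seqL _).trans (.sc (.seqNilL _))

/-! ### The branching bisimulation -/

/-- The process `H‖T‖W(ω,k)ℙ`. -/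
def HTW (H : Cst n α) (T : Proc n α) (ω : List α) (k : Option (Fin n)) (lp : List (Cst n α)) :
    Proc n α :=
  .par (.par (K H) T) (.seq (K (.W ω k)) (seqComp lp))

theorem reach_HTW_W {ω ω' : List α} {k k' : Option (Fin n)}
    (h : Reach u v (K (.W ω k)) (K (.W ω' k'))) (H : Cst n α) (T : Proc n α)
    (lp : List (Cst n α)) : Reach u v (HTW H T ω k lp) (HTW H T ω' k' lp) :=
  (h.seqL _).parR _

theorem reach_HTW_erase (H : Cst n α) (T : Proc n α) (ω : List α) (k : Option (Fin n))
    (lp : List (Cst n α)) (hlp : ∀ c ∈ lp, IsUV c) :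
    Reach u v (HTW H T ω k lp) (.par (K H) T) :=
  reach_par_erase (reach_seq_erase (reach_W_erase _ _) (reach_seqComp_erase lp hlp))

theorem sc_par_right_comm (A B D : Proc n α) : SC (.par (.par A B) D) (.par (.par A D) B) :=
  (SC.parAssoc _ _ _).trans ((SC.parCong (.refl _) (.parComm _ _)).trans (SC.parAssoc _ _ _).symm)

/-- Spawning from `H` inside the parallel context `T`. -/
theorem mreach_HTW {H : Cst n α} {ω : List α} {k : Option (Fin n)}
    {lp : List (Cst n α)} (hlp : ∀ c ∈ lp, IsUV c) (T : Proc n α)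
    (h : Reach u v (K H) (.par (K H) (.seq (K (.W ω k)) (seqComp lp)))) :
    MReach u v (HTW H T ω k lp) (.par (K H) T) :=
  ⟨reach_HTW_erase H T ω k lp hlp, (h.parL T).trans (.sc (sc_par_right_comm _ _ _))⟩

/-- The branching bisimulation behind `C ≃ C‖W(ω,j)ℙ`; the processes are taken up to structural
congruence. -/
inductive CRel (u v : Fin n → List α) : Proc n α → Proc n α → Prop where
  | m {P Q} : MReach u v P Q → CRel u v P Q
  | c {P Q} (T ω j lp) : (∀ c ∈ lp, IsUV c) → (∃ i, ω <:+ u i ∨ ω <:+ v i) →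
      SC P (HTW .C T ω (some j) lp) → MReach u v Q (.par (K .C) T) → CRel u v P Q
  | i {P Q} (T ω j lp) : (∀ c ∈ lp, IsUV c) →
      SC P (HTW .I T ω (some j) lp) → SC Q (HTW .I T ω none lp) → CRel u v P Q
  | s {P Q} (T ω k lp) : (∀ c ∈ lp, IsUV c) →
      SC P (HTW .S T ω k lp) → SC Q (HTW .S T [] k lp) → CRel u v P Q

theorem CRel.reach {P Q : Proc n α} (h : CRel u v P Q) : Reach u v P Q := by
  cases h with
  | m h => exact h.1
  | c T ω j lp hlp _ hP hQ =>
    exact ((Reach.sc hP).trans (reach_HTW_erase _ _ _ _ _ hlp)).trans hQ.2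
  | i T ω j lp _ hP hQ =>
    exact ((Reach.sc hP).trans (reach_HTW_W (reach_W_none _ _) _ _ _)).trans (.sc hQ.symm)
  | s T ω k lp _ hP hQ =>
    exact ((Reach.sc hP).trans (reach_HTW_W (reach_W_nil _ _) _ _ _)).trans (.sc hQ.symm)

/-- The transitions of `H‖T‖W(ω,k)ℙ` come from `H`, from `T` or from `W(ω,k)`. -/
theorem lstep_HTW {H : Cst n α} {T : Proc n α} {ω : List α} {k : Option (Fin n)}
    {lp : List (Cst n α)} {ℓ : Lab n α} {P' : Proc n α} (h : LStep u v (HTW H T ω k lp) ℓ P') :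
    (∃ H', Step u v (.cst H) ℓ H' ∧
      P' = .par (.par H' T) (.seq (K (.W ω k)) (seqComp lp))) ∨
    (∃ T', LStep u v T ℓ T' ∧ P' = HTW H T' ω k lp) ∨
    (∃ W', Step u v (.cst (.W ω k)) ℓ W' ∧
      P' = .par (.par (K H) T) (.seq W' (seqComp lp))) := by
  unfold HTW K at h
  cases h with
  | parL _ h =>
    cases h with
    | parL _ h =>
      cases h with
      | base h => exact .inl ⟨_, h, rfl⟩
    | parR _ h => exact .inr (.inl ⟨_, h, rfl⟩)
  | parR _ h =>
    cases h with
    | seqL _ h =>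
      cases h with
      | base h => exact .inr (.inr ⟨_, h, rfl⟩)
    | seqR hn _ => exact hn.elim

theorem lstep_T {T T' : Proc n α} {ℓ : Lab n α} (h : LStep u v T ℓ T') (H : Cst n α) (ω : List α)
    (k : Option (Fin n)) (lp : List (Cst n α)) :
    LStep u v (HTW H T ω k lp) ℓ (HTW H T' ω k lp) := .parL _ (.parR _ h)

theorem lstep_H {H H' : Cst n α} {ℓ : Lab n α} (h : Step u v (K H) ℓ (K H')) (T : Proc n α)
    (ω : List α) (k : Option (Fin n)) (lp : List (Cst n α)) :
    LStep u v (HTW H T ω k lp) ℓ (HTW H' T ω k lp) := .parL _ (.parL _ (.base h))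

theorem lstep_W {ω ω' : List α} {k k' : Option (Fin n)} {ℓ : Lab n α}
    (h : Step u v (K (.W ω k)) ℓ (K (.W ω' k'))) (H : Cst n α) (T : Proc n α)
    (lp : List (Cst n α)) :
    LStep u v (HTW H T ω k lp) ℓ (HTW H T ω' k' lp) := .parR _ (.seqL _ (.base h))

/-- A process that silently reaches `B` answers with any transition of `B`. -/
theorem answer {P P' Q B B' : Proc n α} {ℓ : Lab n α} (hQ : Reach u v Q B)
    (hB : LStep u v B ℓ B') (h1 : ∀ Q'', SC Q'' B → CRel u v P Q'') (h2 : CRel u v P' B') :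
    ∃ Q'' Q', SilentStar (GTrans u v) .tau Q Q'' ∧ GTrans u v Q'' ℓ Q' ∧ CRel u v P Q'' ∧
      CRel u v P' Q' := by
  obtain ⟨Q0, a, b⟩ := hQ.silent
  obtain ⟨B1, B2, c1, c2, c3⟩ := hB.gtrans
  exact ⟨Q0, B', a, ⟨B1, B2, b.trans c1, c2, c3⟩, h1 _ b, h2⟩

/-- The forward clause for `C‖T‖W(ω,j)ℙ` against the silent cycle of `C‖T`. -/
theorem forward_c {P Q P' : Proc n α} {ℓ : Lab n α} {T : Proc n α} {ω : List α} {j : Fin n}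
    {lp : List (Cst n α)} (hlp : ∀ c ∈ lp, IsUV c) (hW : ∃ i, ω <:+ u i ∨ ω <:+ v i)
    (hP : SC P (HTW .C T ω (some j) lp)) (hQ : MReach u v Q (.par (K .C) T))
    (h : GTrans u v P ℓ P') :
    (ℓ = .tau ∧ CRel u v P' Q) ∨
      ∃ Q'' Q', SilentStar (GTrans u v) .tau Q Q'' ∧ GTrans u v Q'' ℓ Q' ∧ CRel u v P Q'' ∧
        CRel u v P' Q' := by
  obtain ⟨P1, hs, hP'⟩ := h.lstep hP
  have toC : ∀ B, MReach u v B (.par (K .C) T) → ∀ Q'', SC Q'' B → CRel u v P Q'' :=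
    fun B hB Q'' hq => .c T ω j lp hlp hW hP ((MReach.sc hq).trans hB)
  have mnone : MReach u v (HTW .C T ω none lp) (.par (K .C) T) :=
    mreach_HTW hlp T (reach_C_W_none lp hlp ω hW)
  have mnil : MReach u v (HTW .C T [] (some j) lp) (.par (K .C) T) :=
    mreach_HTW hlp T (reach_C_W_nil lp hlp j)
  -- a process spawned by `C` is absorbed into the context `T`
  have absorb : ∀ A : Proc n α, Step u v (K .C) .tau (.par (K .C) A) → Reach u v A .nil →
      SC P' (.par (.par (.par (K .C) A) T) (.seq (K (.W ω (some j))) (seqComp lp))) →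
      CRel u v P' Q := by
    intro A hA hA0 hsc
    refine .c (.par A T) ω j lp hlp hW (hsc.trans (.parCong (.parAssoc _ _ _) (.refl _))) ?_
    refine hQ.trans ⟨((Reach.step hA).parL T).trans (.sc (.parAssoc _ _ _)), ?_⟩
    exact (Reach.sc (SC.parAssoc _ _ _).symm).trans ((reach_par_erase hA0).parL T)
  rcases lstep_HTW hs with ⟨H', hH, rfl⟩ | ⟨T', hT, rfl⟩ | ⟨W', hW', rfl⟩
  · cases hH with
    | cI =>
      exact .inr (answer (hQ.1.trans mnone.2) (lstep_H .cI _ _ _ _) (toC _ mnone)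
        (.i T ω j lp hlp hP' (.refl _)))
    | cS =>
      exact .inr (answer (hQ.1.trans mnil.2) (lstep_H .cS _ _ _ _) (toC _ mnil)
        (.s T ω (some j) lp hlp hP' (.refl _)))
    | cG => exact .inl ⟨rfl, absorb _ .cG (.step .gE) hP'⟩
    | cGv => exact .inl ⟨rfl, absorb _ .cGv (.step .gvE) hP'⟩
  · exact .inr (answer hQ.1 (.parR _ hT) (toC _ (.refl _)) (.c T' ω j lp hlp hW hP' (.refl _)))
  · cases hW' with
    | wA a ω' =>
      have hW2 : ∃ i, ω' <:+ u i ∨ ω' <:+ v i := by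
        obtain ⟨i, hi⟩ := hW
        exact ⟨i, hi.imp (List.suffix_cons a ω').trans (List.suffix_cons a ω').trans⟩
      exact .inr (answer (hQ.1.trans mnone.2) (lstep_W (.wA a ω' none) _ _ _) (toC _ mnone)
        (.c T ω' j lp hlp hW2 hP' (mreach_HTW hlp T (reach_C_W_none lp hlp ω' hW2))))
    | wTa a ω' =>
      have hW2 : ∃ i, ω' <:+ u i ∨ ω' <:+ v i := by
        obtain ⟨i, hi⟩ := hW
        exact ⟨i, hi.imp (List.suffix_cons a ω').trans (List.suffix_cons a ω').trans⟩
      exact .inl ⟨rfl, .c T ω' j lp hlp hW2 hP' hQ⟩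
    | wI =>
      refine .inr (answer (hQ.1.trans mnil.2) (lstep_W (.wI [] j) _ _ _) (toC _ mnil) (.m ?_))
      exact ((MReach.sc hP').trans mnone).trans
        (mreach_HTW hlp T (reach_C_W_none lp hlp [] ⟨j, .inl List.nil_suffix⟩)).symm
    | wTi => exact .inl ⟨rfl, .m (((MReach.sc hP').trans mnone).trans hQ.symm)⟩

/-- The forward clause for `I‖T‖W(ω,j)ℙ` against `I‖T‖W(ω,0)ℙ`. -/
theorem forward_i {P Q P' : Proc n α} {ℓ : Lab n α} {T : Proc n α} {ω : List α} {j : Fin n}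
    {lp : List (Cst n α)} (hlp : ∀ c ∈ lp, IsUV c)
    (hP : SC P (HTW .I T ω (some j) lp)) (hQ : SC Q (HTW .I T ω none lp))
    (h : GTrans u v P ℓ P') :
    (ℓ = .tau ∧ CRel u v P' Q) ∨
      ∃ Q'' Q', SilentStar (GTrans u v) .tau Q Q'' ∧ GTrans u v Q'' ℓ Q' ∧ CRel u v P Q'' ∧
        CRel u v P' Q' := by
  obtain ⟨P1, hs, hP'⟩ := h.lstep hP
  have self : ∀ Q'', SC Q'' (HTW .I T ω none lp) → CRel u v P Q'' :=
    fun Q'' hq => .i T ω j lp hlp hP hq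
  rcases lstep_HTW hs with ⟨H', hH, rfl⟩ | ⟨T', hT, rfl⟩ | ⟨W', hW', rfl⟩
  · cases hH with
    | iC =>
      refine .inr (answer (.sc hQ) (lstep_H .iC _ _ _ _) self (.m ?_))
      exact ((MReach.sc hP').trans (mreach_HTW hlp T (reach_C'_W lp hlp _ _))).trans
        (mreach_HTW hlp T (reach_C'_W lp hlp _ _)).symm
    | iI i =>
      exact .inr (answer (.sc hQ) (lstep_H (.iI i) _ _ _ _) self
        (.i T ω j lp hlp hP' (.refl _)))
  · exact .inr (answer (.sc hQ) (lstep_T hT _ _ _ _) self (.i T' ω j lp hlp hP' (.refl _)))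
  · cases hW' with
    | wA a ω' =>
      exact .inr (answer (.sc hQ) (lstep_W (.wA a ω' none) _ _ _) self
        (.i T ω' j lp hlp hP' (.refl _)))
    | wTa a ω' =>
      exact .inr (answer (.sc hQ) (lstep_W (.wTa a ω' none) _ _ _) self
        (.i T ω' j lp hlp hP' (.refl _)))
    | wI =>
      exact .inr (answer (.sc hQ) (lstep_H (.iI j) _ _ _ _) self (.m (.sc hP')))
    | wTi => exact .inl ⟨rfl, .m (.sc (hP'.trans hQ.symm))⟩

/-- The forward clause for `S‖T‖W(ω,k)ℙ` against `S‖T‖W(ε,k)ℙ`. -/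
theorem forward_s {P Q P' : Proc n α} {ℓ : Lab n α} {T : Proc n α} {ω : List α}
    {k : Option (Fin n)} {lp : List (Cst n α)} (hlp : ∀ c ∈ lp, IsUV c)
    (hP : SC P (HTW .S T ω k lp)) (hQ : SC Q (HTW .S T [] k lp))
    (h : GTrans u v P ℓ P') :
    (ℓ = .tau ∧ CRel u v P' Q) ∨
      ∃ Q'' Q', SilentStar (GTrans u v) .tau Q Q'' ∧ GTrans u v Q'' ℓ Q' ∧ CRel u v P Q'' ∧
        CRel u v P' Q' := by
  obtain ⟨P1, hs, hP'⟩ := h.lstep hP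
  have self : ∀ Q'', SC Q'' (HTW .S T [] k lp) → CRel u v P Q'' :=
    fun Q'' hq => .s T ω k lp hlp hP hq
  rcases lstep_HTW hs with ⟨H', hH, rfl⟩ | ⟨T', hT, rfl⟩ | ⟨W', hW', rfl⟩
  · cases hH with
    | sC =>
      refine .inr (answer (.sc hQ) (lstep_H .sC _ _ _ _) self (.m ?_))
      exact ((MReach.sc hP').trans (mreach_HTW hlp T (reach_C'_W lp hlp _ _))).trans
        (mreach_HTW hlp T (reach_C'_W lp hlp _ _)).symm
    | sS a =>
      exact .inr (answer (.sc hQ) (lstep_H (.sS a) _ _ _ _) self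
        (.s T ω k lp hlp hP' (.refl _)))
  · exact .inr (answer (.sc hQ) (lstep_T hT _ _ _ _) self (.s T' ω k lp hlp hP' (.refl _)))
  · cases hW' with
    | wA a ω' =>
      exact .inr (answer (.sc hQ) (lstep_H (.sS a) _ _ _ _) self
        (.s T ω' k lp hlp hP' (.refl _)))
    | wTa a ω' => exact .inl ⟨rfl, .s T ω' k lp hlp hP' hQ⟩
    | wI _ i =>
      exact .inr (answer (.sc hQ) (lstep_W (.wI [] i) _ _ _) self
        (.s T ω none lp hlp hP' (.refl _)))
    | wTi _ i =>
      exact .inr (answer (.sc hQ) (lstep_W (.wTi [] i) _ _ _) self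
        (.s T ω none lp hlp hP' (.refl _)))
    | wE => exact .inr (answer (.sc hQ) hs self (.m (.sc hP')))

theorem isBranchingBisim_rel : IsBranchingBisim (GTrans u v) .tau (CRel u v) := by
  intro P Q hR
  refine ⟨fun ℓ P' h => ?_, fun ℓ Q' h => ?_⟩
  · cases hR with
    | m hm =>
      obtain ⟨P1, hs, hP'⟩ := h.lstep (.refl P)
      exact .inr (answer hm.2 hs (fun Q'' hq => .m (.sc hq.symm)) (.m (.sc hP')))
    | c T ω j lp hlp hW hP hQ => exact forward_c hlp hW hP hQ h
    | i T ω j lp hlp hP hQ => exact forward_i hlp hP hQ h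
    | s T ω k lp hlp hP hQ => exact forward_s hlp hP hQ h
  -- the left-hand process silently reaches the right-hand one, so it can copy its moves
  · obtain ⟨Q0, a, b⟩ := hR.reach.silent
    obtain ⟨Q1, Q2, c1, c2, c3⟩ := h
    exact .inr ⟨Q0, Q', a, ⟨Q1, Q2, b.trans c1, c2, c3⟩, .m (.sc b), .m (.refl _)⟩

theorem BrBisim.symm' {P Q : Proc n α} (h : BrBisim (GTrans u v) .tau P Q) :
    BrBisim (GTrans u v) .tau Q P := by
  obtain ⟨R, hR, h⟩ := h
  exact ⟨fun P Q => R Q P, fun P Q h => ⟨(hR Q P h).2, (hR Q P h).1⟩, h⟩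

theorem MReach.brBisim {P Q : Proc n α} (h : MReach u v P Q) : BrBisim (GTrans u v) .tau P Q :=
  ⟨CRel u v, isBranchingBisim_rel, .m h⟩

end CGenerator

/-- Corollary 5(2) of the paper: `C ≃ C‖Gℙ ≃ C‖ℙ ≃ C‖Wℙ ≃ C‖G_vℙ_v` for all
`ℙ`, `ℙ_v` and every `W`-constant `W`. -/
theorem C_generator_equalities {n : ℕ} {α : Type} [Fintype α]
    (u v : Fin n → List α) (hu : ∀ i, u i ≠ []) (hv : ∀ i, v i ≠ [])
    (lp : List (Cst n α)) (hlp : ∀ c ∈ lp, IsUV c)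
    (lv : List (Fin n)) (ω : List α) (k : Option (Fin n))
    (hW : ∃ i, ω <:+ u i ∨ ω <:+ v i) :
    let P : Proc n α := seqComp lp
    let Pv : Proc n α := seqComp (lv.map fun i => Cst.V i)
    BrBisim (GTrans u v) Lab.tau (K .C) (.par (K .C) (.seq (K .G) P)) ∧
    BrBisim (GTrans u v) Lab.tau (K .C) (.par (K .C) P) ∧
    BrBisim (GTrans u v) Lab.tau (K .C) (.par (K .C) (.seq (K (.W ω k)) P)) ∧
    BrBisim (GTrans u v) Lab.tau (K .C) (.par (K .C) (.seq (K .Gv) Pv)) := by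
  intro P Pv
  have eP : Reach u v P .nil := reach_seqComp_erase lp hlp
  have ePv : Reach u v Pv .nil := by
    refine reach_seqComp_erase _ fun c hc => ?_
    obtain ⟨i, -, rfl⟩ := List.mem_map.1 hc
    exact .inr ⟨i, rfl⟩
  refine ⟨MReach.brBisim ⟨reach_C_G lp hlp, reach_par_erase (reach_seq_erase (.step .gE) eP)⟩,
    MReach.brBisim ⟨reach_C_P lp hlp, reach_par_erase eP⟩, ?_,
    MReach.brBisim ⟨reach_C_Gv lv, reach_par_erase (reach_seq_erase (.step .gvE) ePv)⟩⟩
  cases k with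
  | none =>
    exact MReach.brBisim ⟨reach_C_W_none lp hlp ω hW,
      reach_par_erase (reach_seq_erase (reach_W_erase _ _) eP)⟩
  | some j =>
    -- the index `j` need not match `ω`, so `C` may be unable to generate `W(ω,j)`
    have hnil : SC (K .C : Proc n α) (.par (K .C) .nil) :=
      ((SC.parComm _ _).trans (.parNil _)).symm
    exact BrBisim.symm' ⟨CRel u v, isBranchingBisim_rel,
      .c .nil ω j lp hlp hW (.parCong hnil (.refl _)) (.sc hnil)⟩
end

section
/- In the process algebra 𝒢 built from a PCP instance INST: for all ℚ, the processes C', C'‖G'ℚ, C'‖G_vℚ, C'‖Zℚ, and C'‖ℚ are all branching bisimilar to one another. -/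
theorem brBisim_of_cycle {S A : Type*} {tr : S → A → S → Prop} {τ : A} {P Q : S}
    (hPQ : SilentStar tr τ P Q) (hQP : SilentStar tr τ Q P) : BrBisim tr τ P Q := by
  refine ⟨fun P Q => SilentStar tr τ P Q ∧ SilentStar tr τ Q P, ?_, hPQ, hQP⟩
  rintro P Q ⟨h₁, h₂⟩
  exact ⟨fun ℓ P' h => Or.inr ⟨P, P', h₂, h, ⟨.refl, .refl⟩, ⟨.refl, .refl⟩⟩,
    fun ℓ Q' h => Or.inr ⟨Q, Q', h₁, h, ⟨.refl, .refl⟩, ⟨.refl, .refl⟩⟩⟩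

section

variable {n : ℕ} {α : Type} {u v : Fin n → List α}

/-- One silent transition of `𝒢`, up to structural congruence. -/
def TauStep (u v : Fin n → List α) (P Q : Proc n α) : Prop := GTrans u v P .tau Q

theorem Step.tauStep {P Q : Proc n α} (h : Step u v P .tau Q) : TauStep u v P Q :=
  ⟨P, Q, .refl _, h, .refl _⟩

theorem TauStep.congr_left {P P' Q : Proc n α} (h : TauStep u v P' Q) (hP : SC P P') :
    TauStep u v P Q :=
  let ⟨A, B, h₁, h₂, h₃⟩ := h
  ⟨A, B, hP.trans h₁, h₂, h₃⟩

theorem TauStep.congr_right {P Q Q' : Proc n α} (h : TauStep u v P Q') (hQ : SC Q' Q) :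
    TauStep u v P Q :=
  let ⟨A, B, h₁, h₂, h₃⟩ := h
  ⟨A, B, h₁, h₂, h₃.trans hQ⟩

/-- The context `C'‖(—)R` preserves silent steps. -/
theorem TauStep.context {P Q : Proc n α} (R : Proc n α) (h : TauStep u v P Q) :
    TauStep u v (.par (K .C') (.seq P R)) (.par (K .C') (.seq Q R)) :=
  let ⟨_, _, h₁, h₂, h₃⟩ := h
  ⟨_, _, .parCong (.refl _) (.seqCong h₁ (.refl _)), .parR _ (.seqL _ h₂),
    .parCong (.refl _) (.seqCong h₃ (.refl _))⟩

theorem transGen_congr_left {P P' Q : Proc n α}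
    (h : Relation.TransGen (TauStep u v) P' Q) (hP : SC P P') :
    Relation.TransGen (TauStep u v) P Q := by
  obtain ⟨B, h₁, h₂⟩ := Relation.TransGen.head'_iff.1 h
  exact Relation.TransGen.head'_iff.2 ⟨B, h₁.congr_left hP, h₂⟩

theorem W_vanish (ω : List α) (k : Option (Fin n)) :
    Relation.ReflTransGen (TauStep u v) (K (.W ω k)) .nil := by
  have hnone : Relation.ReflTransGen (TauStep u v) (K (.W ω none)) .nil := by
    induction ω with
    | nil => exact .single Step.wE.tauStep
    | cons a ω ih => exact .head (Step.wTa a ω none).tauStep ih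
  cases k with
  | none => exact hnone
  | some i => exact .head (Step.wTi ω i).tauStep hnone

theorem IsUVW.vanish {c : Cst n α} (hc : IsUVW u v c) :
    Relation.ReflTransGen (TauStep u v) (K c) .nil := by
  obtain (⟨i, rfl⟩ | ⟨i, rfl⟩) | ⟨ω, k, rfl, -⟩ := hc
  · exact .head (Step.uW i).tauStep (W_vanish _ _)
  · exact .head (Step.vW i).tauStep (W_vanish _ _)
  · exact W_vanish ω k

/-- The generator `G'` can write any `U`-, `V`- or `W`-constant. -/
theorem IsUVW.generate {c : Cst n α} (hc : IsUVW u v c) :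
    TauStep u v (K .G') (.seq (K .G') (K c)) := by
  obtain (⟨i, rfl⟩ | ⟨i, rfl⟩) | ⟨ω, k, rfl, -⟩ := hc
  · exact (Step.g'U i).tauStep
  · exact (Step.g'V i).tauStep
  · exact (Step.g'W ω k).tauStep

theorem spawn_G' (l : List (Cst n α)) (hl : ∀ c ∈ l, IsUVW u v c) :
    Relation.TransGen (TauStep u v) (K .C') (.par (K .C') (.seq (K .G') (seqComp l))) := by
  induction l with
  | nil =>
    exact .single (Step.c'G.tauStep.congr_right (.parCong (.refl _) (.symm (.seqNilR _))))
  | cons c l ih =>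
    have h := (hl c (by simp)).generate.context (seqComp l)
    exact (ih fun d hd => hl d (by simp [hd])).tail
      (h.congr_right (.parCong (.refl _) (.seqAssoc _ _ _)))

/-- `C'‖ℚ` reaches `C'` in at least one silent step. For `ℚ = ε` this is the detour
`C'‖ε → C'‖G' → C'‖Z → C'`. -/
theorem drain (l : List (Cst n α)) (hl : ∀ c ∈ l, IsUVW u v c) :
    Relation.TransGen (TauStep u v) (.par (K .C') (seqComp l)) (K .C') := by
  induction l with
  | nil =>
    have hunit : SC (.par (K .C') .nil) (K .C' : Proc n α) := (SC.parComm _ _).trans (.parNil _)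
    exact .head (Step.c'G.tauStep.congr_left hunit)
      (.head (Step.parR _ Step.g'Z).tauStep
        (.single ((Step.parR _ Step.zE).tauStep.congr_right hunit)))
  | cons c l ih =>
    have h := (hl c (by simp)).vanish.lift (fun P => Proc.par (K .C') (.seq P (seqComp l)))
      fun _ _ h => h.context _
    exact .trans_right h (transGen_congr_left (ih fun d hd => hl d (by simp [hd]))
      (.parCong (.refl _) (.seqNilL _)))

end

/-- Corollary 5(3) of the paper: `C' ≃ C'‖G'ℚ ≃ C'‖G_vℚ ≃ C'‖Zℚ ≃ C'‖ℚ` for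
all `ℚ`. -/
theorem C'_generator_equalities {n : ℕ} {α : Type} [Fintype α]
    (u v : Fin n → List α) (hu : ∀ i, u i ≠ []) (hv : ∀ i, v i ≠ [])
    (lq : List (Cst n α)) (hlq : ∀ c ∈ lq, IsUVW u v c) :
    let Q : Proc n α := seqComp lq
    BrBisim (GTrans u v) Lab.tau (K .C') (.par (K .C') (.seq (K .G') Q)) ∧
    BrBisim (GTrans u v) Lab.tau (K .C') (.par (K .C') (.seq (K .Gv) Q)) ∧
    BrBisim (GTrans u v) Lab.tau (K .C') (.par (K .C') (.seq (K .Z) Q)) ∧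
    BrBisim (GTrans u v) Lab.tau (K .C') (.par (K .C') Q) := by
  intro Q
  have hG' := spawn_G' lq hlq
  have hdrain := drain lq hlq
  have toGv := (Step.g'Gv (u := u) (v := v)).tauStep.context Q
  have toZ := (Step.g'Z (u := u) (v := v)).tauStep.context Q
  have hunit : SC (.par (K .C') (.seq .nil Q)) (.par (K .C') Q) :=
    .parCong (.refl _) (.seqNilL _)
  have dropGv := ((Step.gvE (u := u) (v := v)).tauStep.context Q).congr_right hunit
  have dropZ := ((Step.zE (u := u) (v := v)).tauStep.context Q).congr_right hunit
  have fromGv := hdrain.head dropGv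
  exact ⟨brBisim_of_cycle hG'.to_reflTransGen (fromGv.head toGv).to_reflTransGen,
    brBisim_of_cycle (hG'.tail toGv).to_reflTransGen fromGv.to_reflTransGen,
    brBisim_of_cycle (hG'.tail toZ).to_reflTransGen (hdrain.head dropZ).to_reflTransGen,
    brBisim_of_cycle ((hG'.tail toZ).tail dropZ).to_reflTransGen hdrain.to_reflTransGen⟩
end

section
/- In the process algebra 𝒢 built from a PCP instance INST: let 𝕌 = U_{i₁}U_{i₂}…U_{i_l} and 𝕍 = V_{j₁}V_{j₂}…V_{j_r} (sequential compositions), let B ∈ {ε, Z, G_v}, and let ℙ be any sequential composition of constants from {U₁,…,Uₙ,V₁,…,Vₙ}. Then S‖Bℙ𝕌 ≃ S‖Bℙ𝕍 if and only if the index sequences are equal, i.e. i₁i₂…i_l = j₁j₂…j_r, and likewise S‖Bℙ𝕌 ≈ S‖Bℙ𝕍 if and only if i₁i₂…i_l = j₁j₂…j_r. -/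
namespace PCP

/-! ### A compositional presentation of the transitions -/

section Algebra

variable {n : ℕ} {α : Type} {u v : Fin n → List α}

/-- The processes structurally congruent to `ε`. -/
def Null : Proc n α → Prop
  | .nil => True
  | .cst _ => False
  | .seq P Q => Null P ∧ Null Q
  | .par P Q => Null P ∧ Null Q

theorem Null.sc {P : Proc n α} (h : Null P) : SC P .nil := by
  induction P with
  | nil => exact .refl _
  | cst c => exact h.elim
  | seq P Q ihP ihQ => exact (SC.seqCong (ihP h.1) (ihQ h.2)).trans (.seqNilL _)
  | par P Q ihP ihQ => exact (SC.parCong (ihP h.1) (ihQ h.2)).trans (.parNil _)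

theorem sc_null_iff {P Q : Proc n α} (h : SC P Q) : Null P ↔ Null Q := by
  induction h <;> simp_all [Null] <;> tauto

/-- The transitions with structural congruence compiled away on the source side: a raw step of a
constant, closed under contexts, where a sequential composition may also proceed with its second
component once its first component is congruent to `ε`. -/
inductive SStep (u v : Fin n → List α) : Proc n α → Lab n α → Proc n α → Prop where
  | base {c ℓ P'} : Step u v (.cst c) ℓ P' → SStep u v (.cst c) ℓ P'
  | seqL {P ℓ P'} (Q) : SStep u v P ℓ P' → SStep u v (.seq P Q) ℓ (.seq P' Q)
  | seqR {P Q ℓ Q'} : Null P → SStep u v Q ℓ Q' → SStep u v (.seq P Q) ℓ Q'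
  | parL {P ℓ P'} (Q) : SStep u v P ℓ P' → SStep u v (.par P Q) ℓ (.par P' Q)
  | parR {Q ℓ Q'} (P) : SStep u v Q ℓ Q' → SStep u v (.par P Q) ℓ (.par P Q')

theorem SStep.of_step {P P' : Proc n α} {ℓ} (h : Step u v P ℓ P') : SStep u v P ℓ P' := by
  induction h with
  | seqL Q _ ih => exact .seqL Q ih
  | parL Q _ ih => exact .parL Q ih
  | parR Q _ ih => exact .parR Q ih
  | _ => exact .base (by constructor)

theorem SStep.not_null {P P' : Proc n α} {ℓ} (h : SStep u v P ℓ P') : ¬ Null P := by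
  induction h <;> simp_all [Null]

/-- One half of the statement that structural congruence is a strong bisimulation for `SStep`. -/
def Sim (u v : Fin n → List α) (P Q : Proc n α) : Prop :=
  ∀ ℓ P', SStep u v P ℓ P' → ∃ Q', SStep u v Q ℓ Q' ∧ SC P' Q'

theorem Sim.seqCong {P P' Q Q' : Proc n α} (hP : SC P P') (hQ : SC Q Q')
    (h1 : Sim u v P P') (h2 : Sim u v Q Q') : Sim u v (.seq P Q) (.seq P' Q') := by
  intro ℓ X h
  cases h with
  | seqL _ h => obtain ⟨Y, hY, e⟩ := h1 _ _ h; exact ⟨_, .seqL _ hY, .seqCong e hQ⟩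
  | seqR hn h =>
    obtain ⟨Y, hY, e⟩ := h2 _ _ h; exact ⟨_, .seqR ((sc_null_iff hP).1 hn) hY, e⟩

theorem Sim.parCong {P P' Q Q' : Proc n α} (hP : SC P P') (hQ : SC Q Q')
    (h1 : Sim u v P P') (h2 : Sim u v Q Q') : Sim u v (.par P Q) (.par P' Q') := by
  intro ℓ X h
  cases h with
  | parL _ h => obtain ⟨Y, hY, e⟩ := h1 _ _ h; exact ⟨_, .parL _ hY, .parCong e hQ⟩
  | parR _ h => obtain ⟨Y, hY, e⟩ := h2 _ _ h; exact ⟨_, .parR _ hY, .parCong hP e⟩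

theorem sc_sim {P Q : Proc n α} (h : SC P Q) : Sim u v P Q ∧ Sim u v Q P := by
  induction h with
  | refl P => exact ⟨fun _ P' h => ⟨P', h, .refl _⟩, fun _ P' h => ⟨P', h, .refl _⟩⟩
  | symm _ ih => exact ih.symm
  | trans _ _ ih1 ih2 =>
    constructor
    · intro ℓ X h
      obtain ⟨Y, hY, e⟩ := ih1.1 _ _ h
      obtain ⟨Z, hZ, e'⟩ := ih2.1 _ _ hY
      exact ⟨Z, hZ, e.trans e'⟩
    · intro ℓ X h
      obtain ⟨Y, hY, e⟩ := ih2.2 _ _ h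
      obtain ⟨Z, hZ, e'⟩ := ih1.2 _ _ hY
      exact ⟨Z, hZ, e.trans e'⟩
  | seqCong hP hQ ih1 ih2 =>
    exact ⟨.seqCong hP hQ ih1.1 ih2.1, .seqCong hP.symm hQ.symm ih1.2 ih2.2⟩
  | parCong hP hQ ih1 ih2 =>
    exact ⟨.parCong hP hQ ih1.1 ih2.1, .parCong hP.symm hQ.symm ih1.2 ih2.2⟩
  | seqAssoc P Q R =>
    constructor
    · intro ℓ X h
      cases h with
      | seqL _ h =>
        cases h with
        | seqL _ h => exact ⟨_, .seqL _ h, .seqAssoc _ _ _⟩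
        | seqR hn h => exact ⟨_, .seqR hn (.seqL _ h), .refl _⟩
      | seqR hn h => exact ⟨_, .seqR hn.1 (.seqR hn.2 h), .refl _⟩
    · intro ℓ X h
      cases h with
      | seqL _ h => exact ⟨_, .seqL _ (.seqL _ h), (SC.seqAssoc _ _ _).symm⟩
      | seqR hn h =>
        cases h with
        | seqL _ h => exact ⟨_, .seqL _ (.seqR hn h), .refl _⟩
        | seqR hm h => exact ⟨_, .seqR ⟨hn, hm⟩ h, .refl _⟩
  | parAssoc P Q R =>
    constructor
    · intro ℓ X h
      cases h with
      | parL _ h =>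
        cases h with
        | parL _ h => exact ⟨_, .parL _ h, .parAssoc _ _ _⟩
        | parR _ h => exact ⟨_, .parR _ (.parL _ h), .parAssoc _ _ _⟩
      | parR _ h => exact ⟨_, .parR _ (.parR _ h), .parAssoc _ _ _⟩
    · intro ℓ X h
      cases h with
      | parL _ h => exact ⟨_, .parL _ (.parL _ h), (SC.parAssoc _ _ _).symm⟩
      | parR _ h =>
        cases h with
        | parL _ h => exact ⟨_, .parL _ (.parR _ h), (SC.parAssoc _ _ _).symm⟩
        | parR _ h => exact ⟨_, .parR _ h, (SC.parAssoc _ _ _).symm⟩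
  | parComm P Q =>
    constructor <;>
    · intro ℓ X h
      cases h with
      | parL _ h => exact ⟨_, .parR _ h, .parComm _ _⟩
      | parR _ h => exact ⟨_, .parL _ h, .parComm _ _⟩
  | seqNilL P =>
    constructor
    · intro ℓ X h
      cases h with
      | seqL _ h => exact absurd trivial h.not_null
      | seqR _ h => exact ⟨_, h, .refl _⟩
    · intro ℓ X h
      exact ⟨_, .seqR trivial h, .refl _⟩
  | seqNilR P =>
    constructor
    · intro ℓ X h
      cases h with
      | seqL _ h => exact ⟨_, h, .seqNilR _⟩
      | seqR _ h => exact absurd trivial h.not_null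
    · intro ℓ X h
      exact ⟨_, .seqL _ h, (SC.seqNilR _).symm⟩
  | parNil P =>
    constructor
    · intro ℓ X h
      cases h with
      | parL _ h => exact absurd trivial h.not_null
      | parR _ h => exact ⟨_, h, .parNil _⟩
    · intro ℓ X h
      exact ⟨_, .parR _ h, (SC.parNil _).symm⟩

/-! ### Contexts and silent moves -/

theorem gtrans_of_step {P P' : Proc n α} {ℓ} (h : Step u v P ℓ P') : GTrans u v P ℓ P' :=
  ⟨P, P', .refl _, h, .refl _⟩

theorem gtrans_sc {P Q P' Q' : Proc n α} {ℓ} (h : GTrans u v P ℓ P') (e : SC Q P)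
    (e' : SC P' Q') : GTrans u v Q ℓ Q' := by
  obtain ⟨A, B, h1, h2, h3⟩ := h
  exact ⟨A, B, e.trans h1, h2, h3.trans e'⟩

theorem gtrans_seqL {P P' : Proc n α} {ℓ} (Q : Proc n α) (h : GTrans u v P ℓ P') :
    GTrans u v (.seq P Q) ℓ (.seq P' Q) := by
  obtain ⟨A, B, h1, h2, h3⟩ := h
  exact ⟨_, _, .seqCong h1 (.refl _), .seqL Q h2, .seqCong h3 (.refl _)⟩

theorem gtrans_parR {P P' : Proc n α} {ℓ} (Q : Proc n α) (h : GTrans u v P ℓ P') :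
    GTrans u v (.par Q P) ℓ (.par Q P') := by
  obtain ⟨A, B, h1, h2, h3⟩ := h
  exact ⟨_, _, .parCong (.refl _) h1, .parR Q h2, .parCong (.refl _) h3⟩

theorem gtrans_nil_seq {P P' : Proc n α} {ℓ} (h : GTrans u v P ℓ P') :
    GTrans u v (.seq .nil P) ℓ (.seq .nil P') :=
  gtrans_sc h (.seqNilL _) (SC.seqNilL _).symm

/-- If `Q` is congruent to `P`, every transition of `P` is matched by an `SStep` of `Q`. -/
theorem gtrans_inv {P Q P' : Proc n α} {ℓ} (h : GTrans u v P ℓ P') (e : SC P Q) :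
    ∃ X, SStep u v Q ℓ X ∧ SC P' X := by
  obtain ⟨A, B, h1, h2, h3⟩ := h
  obtain ⟨X, hX, eX⟩ := (sc_sim (u := u) (v := v) (h1.symm.trans e)).1 _ _ (.of_step h2)
  exact ⟨X, hX, h3.symm.trans eX⟩

/-- Silent reachability interleaved with structural congruence. -/
def TS (u v : Fin n → List α) : Proc n α → Proc n α → Prop :=
  Relation.ReflTransGen fun P Q => GTrans u v P .tau Q ∨ SC P Q

theorem TS.tau {P Q : Proc n α} (h : GTrans u v P .tau Q) : TS u v P Q := .single (.inl h)

theorem TS.step {P Q : Proc n α} (h : Step u v P .tau Q) : TS u v P Q :=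
  TS.tau (gtrans_of_step h)

theorem TS.sc {P Q : Proc n α} (h : SC P Q) : TS u v P Q := .single (.inr h)

theorem TS.trans {P Q R : Proc n α} (h : TS u v P Q) (h' : TS u v Q R) : TS u v P R :=
  Relation.ReflTransGen.trans h h'

theorem TS.seqL {P P' : Proc n α} (Q : Proc n α) (h : TS u v P P') :
    TS u v (.seq P Q) (.seq P' Q) :=
  Relation.ReflTransGen.lift (fun P => Proc.seq P Q)
    (fun _ _ h => h.imp (gtrans_seqL Q) fun e => .seqCong e (.refl _)) _ _ h

theorem TS.parR {P P' : Proc n α} (Q : Proc n α) (h : TS u v P P') :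
    TS u v (.par Q P) (.par Q P') :=
  Relation.ReflTransGen.lift (fun P => Proc.par Q P)
    (fun _ _ h => h.imp (gtrans_parR Q) fun e => .parCong (.refl _) e) _ _ h

theorem TS.star {P Q : Proc n α} (h : TS u v P Q) :
    ∃ Q', SilentStar (GTrans u v) .tau P Q' ∧ SC Q' Q := by
  induction h with
  | refl => exact ⟨P, .refl, .refl _⟩
  | tail _ h ih =>
    obtain ⟨Q', h1, e⟩ := ih
    rcases h with h | h
    · exact ⟨_, h1.tail (gtrans_sc h e (.refl _)), .refl _⟩
    · exact ⟨Q', h1, e.trans h⟩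

/-! ### Tails: sequential compositions of `U`-, `V`- and `W`-constants -/

/-- Sequential compositions of `U`-, `V`- and `W`-constants. -/
def Tl : Proc n α → Prop
  | .nil => True
  | .cst (.U _) => True
  | .cst (.V _) => True
  | .cst (.W _ _) => True
  | .cst _ => False
  | .seq P Q => Tl P ∧ Tl Q
  | .par _ _ => False

/-- The index sequence still to be emitted by a tail. -/
def ix : Proc n α → List (Fin n)
  | .cst (.U i) => [i]
  | .cst (.V i) => [i]
  | .cst (.W _ (some i)) => [i]
  | .seq P Q => ix P ++ ix Q
  | _ => []

theorem Null.ix_eq {P : Proc n α} (h : Null P) (hT : Tl P) : ix P = [] := by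
  induction P with
  | nil => rfl
  | cst c => exact h.elim
  | seq P Q ihP ihQ => simp [ix, ihP h.1 hT.1, ihQ h.2 hT.2]
  | par P Q => exact hT.elim

theorem tl_W_nil (ω : List α) (k : Option (Fin n)) : TS u v (.cst (.W ω k)) .nil := by
  induction ω with
  | nil =>
    cases k with
    | none => exact .step .wE
    | some i => exact (TS.step (.wTi _ i)).trans (.step .wE)
  | cons a ω ih => exact (TS.step (.wTa a ω k)).trans ih

/-- A tail can vanish silently. -/
theorem Tl.vanish {w : Proc n α} (h : Tl w) : TS u v w .nil := by
  induction w with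
  | nil => exact .sc (.refl _)
  | cst c =>
    cases c with
    | U i => exact (TS.step (.uW i)).trans (tl_W_nil _ _)
    | V i => exact (TS.step (.vW i)).trans (tl_W_nil _ _)
    | W ω k => exact tl_W_nil _ _
    | _ => exact h.elim
  | seq P Q ihP ihQ => exact ((ihP h.1).seqL Q).trans ((TS.sc (.seqNilL _)).trans (ihQ h.2))
  | par => exact h.elim

/-- A step of a tail either leaves the index sequence alone (silently or with a letter), or
removes its first index, visibly or silently. -/
theorem Tl.step {w w' : Proc n α} {ℓ} (h : Tl w) (hs : SStep u v w ℓ w') :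
    Tl w' ∧ (((ℓ = .tau ∨ ∃ a, ℓ = .ltr a) ∧ ix w' = ix w) ∨
      ∃ i, (ℓ = .idx i ∨ ℓ = .tau) ∧ ix w = i :: ix w') := by
  induction hs with
  | base hs =>
    cases hs <;> first | exact h.elim | skip
    case wA a ω k => cases k <;> simp [Tl, ix, K]
    case wTa a ω k => cases k <;> simp [Tl, ix, K]
    all_goals simp [Tl, ix, K]
  | seqL Q hs ih =>
    obtain ⟨h1, h2⟩ := ih h.1
    refine ⟨⟨h1, h.2⟩, ?_⟩
    rcases h2 with ⟨hl, e⟩ | ⟨i, hl, e⟩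
    · exact .inl ⟨hl, by simp [ix, e]⟩
    · exact .inr ⟨i, hl, by simp [ix, e]⟩
  | seqR hn hs ih =>
    obtain ⟨h1, h2⟩ := ih h.2
    refine ⟨h1, ?_⟩
    simpa [ix, hn.ix_eq h.1] using h2
  | parL => exact h.elim
  | parR => exact h.elim

/-- A tail with first index `i` can silently, without losing any index, reach a tail where `i` can
be removed at once, both visibly and silently. -/
theorem Tl.respond {w : Proc n α} {i l} (h : Tl w) (e : ix w = i :: l) :
    ∃ w₁ w₂, TS u v w w₁ ∧ Tl w₁ ∧ ix w₁ = i :: l ∧ Tl w₂ ∧ ix w₂ = l ∧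
      GTrans u v w₁ (.idx i) w₂ ∧ GTrans u v w₁ .tau w₂ := by
  have hW : ∀ ω : List α, ∀ l, [i] = i :: l → ∃ w₂, Tl (K (.W ω (some i))) ∧
      ix (K (.W ω (some i))) = i :: l ∧ Tl w₂ ∧ ix w₂ = l ∧
      GTrans u v (K (.W ω (some i))) (.idx i) w₂ ∧ GTrans u v (K (.W ω (some i))) .tau w₂ := by
    intro ω l hl
    refine ⟨K (.W ω none), trivial, hl, trivial, ?_, gtrans_of_step (.wI ω i),
      gtrans_of_step (.wTi ω i)⟩
    simpa [ix, K] using hl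
  induction w generalizing l with
  | nil => simp [ix] at e
  | par => exact h.elim
  | cst c =>
    cases c with
    | U j =>
      obtain ⟨rfl, rfl⟩ : j = i ∧ [] = l := by simpa [ix] using e
      obtain ⟨w₂, hw⟩ := hW (u j) [] rfl
      exact ⟨_, w₂, .step (.uW j), hw⟩
    | V j =>
      obtain ⟨rfl, rfl⟩ : j = i ∧ [] = l := by simpa [ix] using e
      obtain ⟨w₂, hw⟩ := hW (v j) [] rfl
      exact ⟨_, w₂, .step (.vW j), hw⟩
    | W ω k =>
      cases k with
      | none => simp [ix] at e
      | some j =>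
        obtain ⟨rfl, rfl⟩ : j = i ∧ [] = l := by simpa [ix] using e
        obtain ⟨w₂, hw⟩ := hW ω [] rfl
        exact ⟨_, w₂, .sc (.refl _), hw⟩
    | _ => exact h.elim
  | seq P Q ihP ihQ =>
    rcases hP : ix P with _ | ⟨j, m⟩
    · obtain ⟨w₁, w₂, h1, h2⟩ := ihQ (l := l) h.2 (by simpa [ix, hP] using e)
      exact ⟨w₁, w₂, ((h.1.vanish.seqL Q).trans (.sc (.seqNilL _))).trans h1, h2⟩
    · obtain ⟨rfl, rfl⟩ : j = i ∧ m ++ ix Q = l := by simpa [ix, hP] using e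
      obtain ⟨w₁, w₂, h1, h2, h3, h4, h5, h6, h7⟩ := ihP (l := m) h.1 hP
      exact ⟨.seq w₁ Q, .seq w₂ Q, h1.seqL Q, ⟨h2, h.2⟩, by simp [ix, h3], ⟨h4, h.2⟩,
        by simp [ix, h5], gtrans_seqL Q h6, gtrans_seqL Q h7⟩

/-! ### The abstract system of heads and index sequences -/

/-- The possible heads `ε`, `Z`, `G_v`. -/
inductive Head where
  | e | z | g

/-- The process denoted by a head. -/
def Head.proc : Head → Proc n α
  | .e => .nil
  | .z => K .Z
  | .g => K .Gv

/-- What `S ‖ B w` does, in terms of the head `B` and the index sequence of the tail `w` only,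
the `λ_S`-transition of `S` left aside. -/
inductive AStep : Head → List (Fin n) → Lab n α → Head → List (Fin n) → Prop where
  | idle (b l) : AStep b l .tau b l
  | letter (b l a) : AStep b l (.ltr a) b l
  | index (i l) : AStep .e (i :: l) (.idx i) .e l
  | drop (i l) : AStep .e (i :: l) .tau .e l
  | zT (l) : AStep .z l .tau .e l
  | zZ (l) : AStep .z l .lZ .e l
  | gV (i l) : AStep .g l .tau .g (i :: l)
  | gE (l) : AStep .g l .tau .e l
  | gZ (l) : AStep .g l .lV .z l

/-- `P` is `S ‖ B w` up to congruence, with head `B = b` and a tail `w` of index sequence `l`. -/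
def Rep (b : Head) (l : List (Fin n)) (P : Proc n α) : Prop :=
  ∃ w, Tl w ∧ ix w = l ∧ SC P (.par (K .S) (.seq b.proc w))

/-- `P` is `C' ‖ B w` up to congruence, for some head `B` and some tail `w`. -/
def RepC (P : Proc n α) : Prop :=
  ∃ (b : Head) (w : Proc n α), Tl w ∧ SC P (.par (K .C') (.seq b.proc w))

theorem Rep.inv {b : Head} {l : List (Fin n)} {P P' : Proc n α} {ℓ} (h : Rep b l P)
    (hs : GTrans u v P ℓ P') :
    (ℓ = .lS ∧ RepC P') ∨ ∃ b' l', AStep b l ℓ b' l' ∧ Rep b' l' P' := by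
  obtain ⟨w, hw, rfl, e⟩ := h
  obtain ⟨X, hX, e'⟩ := gtrans_inv hs e
  cases hX with
  | parL _ hX =>
    cases hX with
    | base hX =>
    cases hX with
    | sC => exact .inl ⟨rfl, b, w, hw, e'⟩
    | sS a => exact .inr ⟨b, _, .letter _ _ a, w, hw, rfl, e'⟩
  | parR _ hX =>
    right
    cases hX with
    | seqL _ hX =>
      cases b with
      | e => exact absurd trivial hX.not_null
      | z =>
        cases hX with
        | base hX =>
        cases hX with
        | zE => exact ⟨.e, _, .zT _, w, hw, rfl, e'⟩
        | zZ => exact ⟨.e, _, .zZ _, w, hw, rfl, e'⟩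
      | g =>
        cases hX with
        | base hX =>
        cases hX with
        | gvT i =>
          exact ⟨.g, _, .gV i _, .seq (K (.V i)) w, ⟨trivial, hw⟩, rfl,
            e'.trans (.parCong (.refl _) (.seqAssoc _ _ _))⟩
        | gvE => exact ⟨.e, _, .gE _, w, hw, rfl, e'⟩
        | gvV => exact ⟨.z, _, .gZ _, w, hw, rfl, e'⟩
    | seqR hn hX =>
      cases b with
      | z => exact hn.elim
      | g => exact hn.elim
      | e =>
        obtain ⟨h1, h2⟩ := hw.step hX
        have r : ∀ l, ix _ = l → Rep Head.e l P' := fun l hl =>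
          ⟨_, h1, hl, e'.trans (.parCong (.refl _) (SC.seqNilL _).symm)⟩
        rcases h2 with ⟨rfl | ⟨a, rfl⟩, hx⟩ | ⟨i, rfl | rfl, hx⟩
        · exact ⟨.e, _, .idle _ _, r _ hx⟩
        · exact ⟨.e, _, .letter _ _ a, r _ hx⟩
        · exact ⟨.e, _, hx ▸ .index _ _, r _ rfl⟩
        · exact ⟨.e, _, hx ▸ .drop _ _, r _ rfl⟩

theorem Rep.respond {b b' : Head} {l l' : List (Fin n)} {P : Proc n α} {ℓ} (h : Rep b l P)
    (hs : AStep b l ℓ b' l') :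
    (ℓ = .tau ∧ Rep b' l' P) ∨ ∃ P'' P', SilentStar (GTrans u v) .tau P P'' ∧
      GTrans u v P'' ℓ P' ∧ Rep b l P'' ∧ Rep b' l' P' := by
  have h₀ := h
  obtain ⟨w, hw, hl, e⟩ := h
  -- A step of the head is performed by `P` itself.
  have head : ∀ {X : Proc n α}, Step u v b.proc ℓ X →
      (∃ w', Tl w' ∧ ix w' = l' ∧ SC (.seq X w) (.seq b'.proc w')) →
      ∃ P'' P', SilentStar (GTrans u v) .tau P P'' ∧
        GTrans u v P'' ℓ P' ∧ Rep b l P'' ∧ Rep b' l' P' := by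
    rintro X hX ⟨w', hw', hl', e'⟩
    exact ⟨P, _, .refl, gtrans_sc (gtrans_of_step (.parR _ (.seqL w hX))) e
      (.parCong (.refl _) e'), h₀, w', hw', hl', .refl _⟩
  cases hs with
  | idle => exact .inl ⟨rfl, h₀⟩
  | letter _ _ a =>
    exact .inr ⟨P, P, .refl, gtrans_sc (gtrans_of_step (.parL _ (.sS a))) e e.symm, h₀, h₀⟩
  | index i _ =>
    obtain ⟨w₁, w₂, h1, h2, h3, h4, h5, h6, _⟩ := hw.respond (u := u) (v := v) hl
    obtain ⟨Q, hQ, eQ⟩ := ((TS.sc (e.trans (.parCong (.refl _) (.seqNilL _)))).trans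
      (h1.parR (K .S))).star
    have eQ' := eQ.trans (.parCong (.refl _) (SC.seqNilL _).symm)
    exact .inr ⟨Q, _, hQ, gtrans_sc (gtrans_parR _ (gtrans_nil_seq h6)) eQ' (.refl _),
      ⟨w₁, h2, h3, eQ'⟩, w₂, h4, h5, .refl _⟩
  | drop i _ =>
    obtain ⟨w₁, w₂, h1, h2, h3, h4, h5, _, h7⟩ := hw.respond (u := u) (v := v) hl
    obtain ⟨Q, hQ, eQ⟩ := ((TS.sc (e.trans (.parCong (.refl _) (.seqNilL _)))).trans
      (h1.parR (K .S))).star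
    have eQ' := eQ.trans (.parCong (.refl _) (SC.seqNilL _).symm)
    exact .inr ⟨Q, _, hQ, gtrans_sc (gtrans_parR _ (gtrans_nil_seq h7)) eQ' (.refl _),
      ⟨w₁, h2, h3, eQ'⟩, w₂, h4, h5, .refl _⟩
  | zT => exact .inr (head .zE ⟨w, hw, hl, .refl _⟩)
  | zZ => exact .inr (head .zZ ⟨w, hw, hl, .refl _⟩)
  | gV i =>
    exact .inr (head (.gvT i) ⟨.seq (K (.V i)) w, ⟨trivial, hw⟩, by simp [ix, K, hl],
      .seqAssoc _ _ _⟩)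
  | gE => exact .inr (head .gvE ⟨w, hw, hl, .refl _⟩)
  | gZ => exact .inr (head .gvV ⟨w, hw, hl, .refl _⟩)

/-! ### Equal index sequences give branching bisimilar processes -/

/-- `G'` can silently build any tail behind itself. -/
theorem Tl.build {w : Proc n α} (h : Tl w) : TS u v (K .G') (.seq (K .G') w) := by
  induction w with
  | nil => exact .sc (SC.seqNilR _).symm
  | cst c =>
    cases c with
    | U i => exact .step (.g'U i)
    | V i => exact .step (.g'V i)
    | W ω k => exact .step (.g'W ω k)
    | _ => exact h.elim
  | seq P Q ihP ihQ => exact (ihQ h.2).trans (((ihP h.1).seqL Q).trans (.sc (.seqAssoc _ _ _)))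
  | par => exact h.elim

/-- Next to `C'`, any component `B w` can silently be exchanged for any other one: it vanishes,
and `C'` generates the new one. -/
theorem RepC.ts {P Q : Proc n α} (hP : RepC P) (hQ : RepC Q) : TS u v Q P := by
  obtain ⟨b, w, hw, e⟩ := hP
  obtain ⟨b', w', hw', e'⟩ := hQ
  have h1 : TS u v (b'.proc : Proc n α) .nil := by
    cases b' with
    | e => exact .sc (.refl _)
    | z => exact .step .zE
    | g => exact .step .gvE
  have h2 : TS u v (K .G') (b.proc : Proc n α) := by
    cases b with
    | e => exact (TS.step .g'Z).trans (.step .zE)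
    | z => exact .step .g'Z
    | g => exact .step .g'Gv
  have h3 : TS u v (.seq b'.proc w') .nil :=
    (h1.seqL w').trans ((TS.sc (.seqNilL _)).trans hw'.vanish)
  have h4 : TS u v (K .C') (.par (K .C') (.seq b.proc w)) :=
    (TS.step .c'G).trans ((hw.build.trans (h2.seqL w)).parR _)
  exact (TS.sc e').trans ((h3.parR _).trans ((TS.sc ((SC.parComm _ _).trans (.parNil _))).trans
    (h4.trans (.sc e.symm))))

/-- The branching bisimulation witnessing the positive direction: same head and index sequence as
long as `S` is present, anything once `S` has become `C'`, and structural congruence. -/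
def Rel (P Q : Proc n α) : Prop :=
  (∃ b l, Rep b l P ∧ Rep b l Q) ∨ (RepC P ∧ RepC Q) ∨ SC P Q

theorem Rel.symm {P Q : Proc n α} (h : Rel P Q) : Rel Q P := by
  rcases h with ⟨b, l, h1, h2⟩ | h | h
  · exact .inl ⟨b, l, h2, h1⟩
  · exact .inr (.inl h.symm)
  · exact .inr (.inr h.symm)

theorem Rel.transfer {P Q P' : Proc n α} {ℓ} (h : Rel P Q) (hs : GTrans u v P ℓ P') :
    (ℓ = .tau ∧ Rel P' Q) ∨ ∃ Q'' Q', SilentStar (GTrans u v) .tau Q Q'' ∧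
      GTrans u v Q'' ℓ Q' ∧ Rel P Q'' ∧ Rel P' Q' := by
  rcases h with ⟨b, l, h1, h2⟩ | ⟨h1, h2⟩ | h
  · rcases h1.inv hs with ⟨rfl, hC⟩ | ⟨b', l', hA, hP'⟩
    · obtain ⟨w, hw, hl, e⟩ := h2
      exact .inr ⟨Q, _, .refl, gtrans_sc (gtrans_of_step (.parL _ .sC)) e (.refl _),
        .inl ⟨b, l, h1, w, hw, hl, e⟩, .inr (.inl ⟨hC, b, w, hw, .refl _⟩)⟩
    · rcases h2.respond (u := u) (v := v) hA with ⟨rfl, hQ⟩ | ⟨Q'', Q', a1, a2, a3, a4⟩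
      · exact .inl ⟨rfl, .inl ⟨b', l', hP', hQ⟩⟩
      · exact .inr ⟨Q'', Q', a1, a2, .inl ⟨b, l, h1, a3⟩, .inl ⟨b', l', hP', a4⟩⟩
  · obtain ⟨Q'', a, e⟩ := (h1.ts (u := u) (v := v) h2).star
    exact .inr ⟨Q'', P', a, gtrans_sc hs e (.refl _), .inr (.inr e.symm), .inr (.inr (.refl _))⟩
  · exact .inr ⟨Q, P', .refl, gtrans_sc hs h.symm (.refl _), .inr (.inr h), .inr (.inr (.refl _))⟩

theorem brBisim_of_rep {b : Head} {l : List (Fin n)} {P Q : Proc n α} (hP : Rep b l P)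
    (hQ : Rep b l Q) : BrBisim (GTrans u v) .tau P Q := by
  refine ⟨Rel, fun P Q h => ⟨fun ℓ P' hs => h.transfer hs, fun ℓ Q' hs => ?_⟩,
    .inl ⟨b, l, hP, hQ⟩⟩
  rcases h.symm.transfer hs with ⟨h1, h2⟩ | ⟨P'', P', h1, h2, h3, h4⟩
  · exact .inl ⟨h1, h2.symm⟩
  · exact .inr ⟨P'', P', h1, h2, h3.symm, h4.symm⟩

theorem wkBisim_of_brBisim {P Q : Proc n α} (h : BrBisim (GTrans u v) .tau P Q) :
    WkBisim (GTrans u v) .tau P Q := by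
  obtain ⟨R, hR, h⟩ := h
  have weak : ∀ {ℓ} {Q Q'' Q' : Proc n α}, SilentStar (GTrans u v) .tau Q Q'' →
      GTrans u v Q'' ℓ Q' → WeakStep (GTrans u v) .tau ℓ Q Q' := by
    intro ℓ Q Q'' Q' h1 h2
    by_cases hl : ℓ = .tau
    · subst hl; exact .inl ⟨rfl, h1.tail h2⟩
    · exact .inr ⟨hl, Q'', Q', h1, h2, .refl⟩
  refine ⟨R, fun P Q h => ⟨fun ℓ P' hs => ?_, fun ℓ Q' hs => ?_⟩, h⟩
  · rcases (hR P Q h).1 ℓ P' hs with ⟨rfl, h'⟩ | ⟨Q'', Q', h1, h2, _, h4⟩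
    · exact ⟨Q, .inl ⟨rfl, .refl⟩, h'⟩
    · exact ⟨Q', weak h1 h2, h4⟩
  · rcases (hR P Q h).2 ℓ Q' hs with ⟨rfl, h'⟩ | ⟨P'', P', h1, h2, _, h4⟩
    · exact ⟨P, .inl ⟨rfl, .refl⟩, h'⟩
    · exact ⟨P', weak h1 h2, h4⟩

/-! ### Weakly bisimilar processes have equal index sequences -/

/-- Silent reachability in the abstract system. -/
inductive AStar (α : Type) : Head → List (Fin n) → Head → List (Fin n) → Prop where
  | refl (b l) : AStar α b l b l
  | tail {b l b' l' b'' l''} : AStar α b l b' l' →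
      AStep (α := α) b' l' .tau b'' l'' → AStar α b l b'' l''

theorem Rep.star_inv {b : Head} {l : List (Fin n)} {P P' : Proc n α} (h : Rep b l P)
    (hs : SilentStar (GTrans u v) .tau P P') : ∃ b' l', AStar α b l b' l' ∧ Rep b' l' P' := by
  induction hs with
  | refl => exact ⟨b, l, .refl _ _, h⟩
  | tail _ hs ih =>
    obtain ⟨b', l', h1, h2⟩ := ih
    rcases h2.inv hs with ⟨h, _⟩ | ⟨b'', l'', h3, h4⟩
    · cases h
    · exact ⟨b'', l'', h1.tail h3, h4⟩

/-- Abstract states with weakly bisimilar representatives. -/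
def ARel (u v : Fin n → List α) (b : Head) (l : List (Fin n)) (b' : Head)
    (l' : List (Fin n)) : Prop :=
  ∃ P Q : Proc n α, Rep b l P ∧ Rep b' l' Q ∧ WkBisim (GTrans u v) .tau P Q

theorem ARel.symm {b b' : Head} {l l' : List (Fin n)} (h : ARel u v b l b' l') :
    ARel u v b' l' b l := by
  obtain ⟨P, Q, hP, hQ, R, hR, h⟩ := h
  exact ⟨Q, P, hQ, hP, fun P Q => R Q P, fun P Q h => (hR Q P h).symm, h⟩

theorem wkBisim_star {P Q P' : Proc n α} (h : WkBisim (GTrans u v) .tau P Q)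
    (hs : SilentStar (GTrans u v) .tau P P') :
    ∃ Q', SilentStar (GTrans u v) .tau Q Q' ∧ WkBisim (GTrans u v) .tau P' Q' := by
  obtain ⟨R, hR, h⟩ := h
  suffices ∃ Q', SilentStar (GTrans u v) .tau Q Q' ∧ R P' Q' by
    obtain ⟨Q', h1, h2⟩ := this
    exact ⟨Q', h1, R, hR, h2⟩
  induction hs with
  | refl => exact ⟨Q, .refl, h⟩
  | tail _ hs ih =>
    obtain ⟨Q', h1, h2⟩ := ih
    obtain ⟨Q'', h3, h4⟩ := (hR _ _ h2).1 _ _ hs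
    rcases h3 with ⟨_, h3⟩ | ⟨h3, _⟩
    · exact ⟨Q'', h1.trans h3, h4⟩
    · exact absurd rfl h3

/-- A visible abstract step is matched by an abstract weak step; `λ_S` does not occur among the
abstract steps. -/
theorem ARel.transfer {b b' c : Head} {l l' m : List (Fin n)} {ℓ : Lab n α}
    (h : ARel u v b l b' l') (hs : AStep b l ℓ c m) (hτ : ℓ ≠ .tau) :
    ∃ b₁ l₁ b₂ l₂ c' m', AStar α b' l' b₁ l₁ ∧ AStep b₁ l₁ ℓ b₂ l₂ ∧
      AStar α b₂ l₂ c' m' ∧ ARel u v c m c' m' := by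
  obtain ⟨P, Q, hP, hQ, hPQ⟩ := h
  have hS : ℓ ≠ .lS := by rintro rfl; cases hs
  rcases hP.respond (u := u) (v := v) hs with ⟨h, _⟩ | ⟨P'', P', h1, h2, _, h4⟩
  · exact absurd h hτ
  obtain ⟨Q₀, hQ₀, R, hR, hr⟩ := wkBisim_star hPQ h1
  obtain ⟨Q', hw, hr'⟩ := (hR _ _ hr).1 _ _ h2
  rcases hw with ⟨h, _⟩ | ⟨_, Q₁, Q₂, a1, a2, a3⟩
  · exact absurd h hτ
  obtain ⟨b₁, l₁, s1, r1⟩ := hQ.star_inv (hQ₀.trans a1)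
  rcases r1.inv a2 with ⟨h, _⟩ | ⟨b₂, l₂, s2, r2⟩
  · exact absurd h hS
  obtain ⟨c', m', s3, r3⟩ := r2.star_inv a3
  exact ⟨b₁, l₁, b₂, l₂, c', m', s1, s2, s3, P', Q', h4, r3, R, hR, hr'⟩

theorem AStar.from_e {b b' : Head} {l l' : List (Fin n)} (h : AStar α b l b' l')
    (hb : b = .e) : b' = .e ∧ l' <:+ l := by
  induction h with
  | refl => exact ⟨hb, List.suffix_rfl⟩
  | tail _ hs ih =>
    obtain ⟨rfl, hl⟩ := ih
    cases hs with
    | idle => exact ⟨rfl, hl⟩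
    | drop i => exact ⟨rfl, (List.suffix_cons _ _).trans hl⟩

theorem AStar.from_z {b b' : Head} {l l' : List (Fin n)} (h : AStar α b l b' l')
    (hb : b = .z) : b' = .e ∨ (b' = .z ∧ l' = l) := by
  induction h with
  | refl => exact .inr ⟨hb, rfl⟩
  | tail _ hs ih =>
    rcases ih with rfl | ⟨rfl, rfl⟩
    · cases hs <;> exact .inl rfl
    · cases hs
      · exact .inr ⟨rfl, rfl⟩
      · exact .inl rfl

theorem AStar.from_g {b b' : Head} {l l' : List (Fin n)} (h : AStar α b l b' l')
    (hb : b = .g) : b' = .e ∨ (b' = .g ∧ l <:+ l') := by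
  induction h with
  | refl => exact .inr ⟨hb, List.suffix_rfl⟩
  | tail _ hs ih =>
    rcases ih with rfl | ⟨rfl, hl⟩
    · cases hs <;> exact .inl rfl
    · cases hs with
      | idle => exact .inr ⟨rfl, hl⟩
      | gV i => exact .inr ⟨rfl, hl.trans (List.suffix_cons _ _)⟩
      | gE => exact .inl rfl

theorem ARel.sublist_e {l l' : List (Fin n)} (h : ARel u v .e l .e l') : l.Sublist l' := by
  induction l generalizing l' with
  | nil => exact List.nil_sublist _
  | cons i l ih =>
    obtain ⟨b₁, l₁, b₂, l₂, c', m', s1, s2, s3, r⟩ := h.transfer (.index i l) (by simp)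
    obtain ⟨rfl, h1⟩ := s1.from_e rfl
    cases s2
    obtain ⟨rfl, h3⟩ := s3.from_e rfl
    exact (((ih r).trans h3.sublist).cons_cons i).trans h1.sublist

theorem ARel.sublist_z {l l' : List (Fin n)} (h : ARel u v .z l .z l') : l.Sublist l' := by
  obtain ⟨b₁, l₁, b₂, l₂, c', m', s1, s2, s3, r⟩ := h.transfer (.zZ l) (by simp)
  cases s2
  obtain h | ⟨_, rfl⟩ := s1.from_z rfl
  · cases h
  obtain ⟨rfl, h3⟩ := s3.from_e rfl
  exact r.sublist_e.trans h3.sublist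

/-- `λ_V` turns `G_v` into `Z`, and the answer must keep its `Z`, hence its whole tail. -/
theorem ARel.suffix_g {l l' : List (Fin n)} (h : ARel u v .g l .g l') : l' <:+ l := by
  obtain ⟨b₁, l₁, b₂, l₂, c', m', s1, s2, s3, r⟩ := h.transfer (.gZ l) (by simp)
  cases s2
  obtain h | ⟨_, h1⟩ := s1.from_g rfl
  · cases h
  obtain rfl | ⟨rfl, rfl⟩ := s3.from_z rfl
  · -- `λ_Z` cannot be answered from the head `ε`.
    obtain ⟨b₁, l₁, b₂, l₂, c', m', s1, s2, -⟩ := r.transfer (.zZ l) (by simp)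
    obtain ⟨rfl, -⟩ := s1.from_e rfl
    cases s2
  · rwa [r.sublist_z.antisymm r.symm.sublist_z]

theorem ARel.eq {b : Head} {l l' : List (Fin n)} (h : ARel u v b l b l') : l = l' := by
  cases b with
  | e => exact h.sublist_e.antisymm h.symm.sublist_e
  | z => exact h.sublist_z.antisymm h.symm.sublist_z
  | g => exact h.symm.suffix_g.eq_of_length_le h.suffix_g.length_le

theorem seqComp_tl {l : List (Cst n α)} (h : ∀ c ∈ l, IsUV c) : Tl (seqComp l) := by
  induction l with
  | nil => trivial
  | cons c l ih =>
    refine ⟨?_, ih fun d hd => h d (by simp [hd])⟩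
    rcases h c (by simp) with ⟨i, rfl⟩ | ⟨i, rfl⟩ <;> trivial

theorem ix_seqComp_U (l : List (Fin n)) :
    ix (seqComp (l.map fun i => (Cst.U i : Cst n α))) = l := by
  induction l with
  | nil => rfl
  | cons i l ih => exact congrArg (i :: ·) ih

theorem ix_seqComp_V (l : List (Fin n)) :
    ix (seqComp (l.map fun i => (Cst.V i : Cst n α))) = l := by
  induction l with
  | nil => rfl
  | cons i l ih => exact congrArg (i :: ·) ih

end Algebra

end PCP

/-- Lemma 6(2) of the paper: for `𝕌 = U_{i₁}…U_{i_l}`, `𝕍 = V_{j₁}…V_{j_r}`,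
`B ∈ {ε, Z, G_v}` and any `ℙ`:  `S‖Bℙ𝕌 ≃ S‖Bℙ𝕍` iff the index sequences are
equal, i.e. `i₁…i_l = j₁…j_r`, and likewise for `≈`. -/
theorem S_checks_indices {n : ℕ} {α : Type} [Fintype α]
    (u v : Fin n → List α) (hu : ∀ i, u i ≠ []) (hv : ∀ i, v i ≠ [])
    (is js : List (Fin n))
    (B : Proc n α) (hB : B = Proc.nil ∨ B = K Cst.Z ∨ B = K Cst.Gv)
    (lp : List (Cst n α)) (hlp : ∀ c ∈ lp, IsUV c) :
    let UU : Proc n α := seqComp (is.map fun i => Cst.U i)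
    let VV : Proc n α := seqComp (js.map fun j => Cst.V j)
    let P : Proc n α := seqComp lp
    (BrBisim (GTrans u v) Lab.tau
        (.par (K .S) (.seq B (.seq P UU))) (.par (K .S) (.seq B (.seq P VV))) ↔
      is = js) ∧
    (WkBisim (GTrans u v) Lab.tau
        (.par (K .S) (.seq B (.seq P UU))) (.par (K .S) (.seq B (.seq P VV))) ↔
      is = js) := by
  intro UU VV P
  obtain ⟨b, rfl⟩ : ∃ b : PCP.Head, B = b.proc := by
    rcases hB with rfl | rfl | rfl
    exacts [⟨.e, rfl⟩, ⟨.z, rfl⟩, ⟨.g, rfl⟩]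
  have hP : PCP.Tl P := PCP.seqComp_tl hlp
  have hU : PCP.Rep b (PCP.ix P ++ is) (.par (K .S) (.seq b.proc (.seq P UU))) :=
    ⟨.seq P UU, ⟨hP, PCP.seqComp_tl (by simp [IsUV])⟩,
      congrArg (PCP.ix P ++ ·) (PCP.ix_seqComp_U is), .refl _⟩
  have hV : PCP.Rep b (PCP.ix P ++ js) (.par (K .S) (.seq b.proc (.seq P VV))) :=
    ⟨.seq P VV, ⟨hP, PCP.seqComp_tl (by simp [IsUV])⟩,
      congrArg (PCP.ix P ++ ·) (PCP.ix_seqComp_V js), .refl _⟩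
  have eq_of_wk : WkBisim (GTrans u v) Lab.tau (.par (K .S) (.seq b.proc (.seq P UU)))
      (.par (K .S) (.seq b.proc (.seq P VV))) → is = js := fun h =>
    List.append_cancel_left (PCP.ARel.eq (u := u) (v := v) ⟨_, _, hU, hV, h⟩)
  have br_of_eq : is = js → BrBisim (GTrans u v) Lab.tau
      (.par (K .S) (.seq b.proc (.seq P UU))) (.par (K .S) (.seq b.proc (.seq P VV))) := by
    intro h
    exact PCP.brBisim_of_rep hU (h ▸ hV)
  exact ⟨⟨fun h => eq_of_wk (PCP.wkBisim_of_brBisim h), br_of_eq⟩,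
    ⟨eq_of_wk, fun h => PCP.wkBisim_of_brBisim (br_of_eq h)⟩⟩
end
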